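/- arXiv:2601.18590 — 2 statements merged into one kernel-verified Lean document; each statement's English description precedes it below -/
import Mathlib

section
/- Let q be a prime power and let δ ∈ (0, 1 − 1/q²) be a constant. Then there exist constants c > 0, c' > 0 and c'' > 0 such that for all sufficiently large n the following holds with d − 1 = ⌊δn⌋ and ℓ = ⌊c''√n⌋: among all ℓ-tuples (u_1, …, u_ℓ) of vectors in B_q^S(2n, d−1) that are linearly independent over 𝔽_q and pairwise symplectically orthogonal (⟨u_i, u_j⟩_S = 0 for all i, j), the number of tuples for which the two-sided estimate ((1 − q^{−cn})/q^ℓ) · Vol_q^S(2n, d−1) ≤ |B_q^S(2n, d−1) ∩ {v : ⟨u_1,v⟩_S = 0} ∩ ⋯ ∩ {v : ⟨u_ℓ,v⟩_S = 0}| ≤ ((1 + q^{−cn})/q^ℓ) · Vol_q^S(2n, d−1) fails is at most a q^{−c'n} fraction of the total number of such linearly independent pairwise symplectically orthogonal ℓ-tuples. -/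
open Finset
open scoped Classical

/-- Symplectic weight of a vector in `F^{2n}`, written as `Fin n → F × F`. -/
noncomputable def sympWt {F : Type} [Zero F] [DecidableEq F] {n : ℕ} (u : Fin n → F × F) : ℕ :=
  hammingNorm u

/-- The symplectic inner product on `F^{2n}`: `⟨(a|b),(a'|b')⟩_S = ⟨a,b'⟩ - ⟨b,a'⟩`. -/
def sympInner {F : Type} [Field F] {n : ℕ} (u v : Fin n → F × F) : F :=
  ∑ i, ((u i).1 * (v i).2 - (u i).2 * (v i).1)

/-- The symplectic ball `B_q^S(2n, r)` of radius `r`. -/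
noncomputable def sympBall (F : Type) [Fintype F] [Zero F] [DecidableEq F] (n r : ℕ) :
    Finset (Fin n → F × F) :=
  Finset.univ.filter fun x => sympWt x ≤ r

/-- `Vol_q^S(2n, r) = ∑_{i=0}^{r} C(n,i)(q²-1)^i`, the volume of the symplectic ball. -/
def volS (q n r : ℕ) : ℕ :=
  ∑ i ∈ Finset.range (r + 1), n.choose i * (q ^ 2 - 1) ^ i

/-!
Summing an additive character over all linear combinations `∑ i, a i • u i` expresses `q ^ ℓ`
times the number of vectors of the ball orthogonal to every `u i` as the volume of the ball, which
is the term `a = 0`, plus the values of the Fourier transform of the ball at the nontrivial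
combinations. These values factor over the coordinates, and comparing the ball with its weight
generating function at the point where the terms of weight `r` dominate shows that the transform
at a vector of weight `w` is at most `(n + 1) * ρ ^ w` times the volume, with `ρ < 1` depending
only on `q` and `r / n`. Hence the estimate can only fail for a tuple that has a nontrivial
combination of weight at most `ε * n`.

Such a tuple is determined by the coefficients of the combination, the combination itself and all
entries but one, so for each shorter orthogonal tuple there are at most `q ^ ℓ` times the volume of
a ball of radius `ε * n` of them. On the other hand, each orthogonal `m`-tuple has many extensions:
two vectors of the ball of radius `r / 2` with the same inner products with the tuple differ by an
orthogonal vector of the ball of radius `r`, so by pigeonhole there are at least `q ^ (-m)` times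
the volume of the ball of radius `r / 2` such vectors, and at most `q ^ m` of them lie in the span.
-/

open Filter Topology

section Combinatorics

theorem factorial_mul_pow_le_factorial_mul_pow_self (r j : ℕ) :
    r.factorial * r ^ j ≤ j.factorial * r ^ r := by
  rcases le_total r j with hrj | hjr
  · calc r.factorial * r ^ j = r.factorial * r ^ (j - r) * r ^ r := by
          rw [mul_assoc, ← pow_add, Nat.sub_add_cancel hrj]
      _ ≤ j.factorial * r ^ r :=
          Nat.mul_le_mul_right _ (Nat.factorial_mul_pow_sub_le_factorial hrj)
  · calc r.factorial * r ^ j = j.factorial * r.descFactorial (r - j) * r ^ j := by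
          rw [← Nat.factorial_mul_descFactorial (Nat.sub_le r j), Nat.sub_sub_self hjr]
      _ ≤ j.factorial * r ^ (r - j) * r ^ j := by
          gcongr
          exact Nat.descFactorial_le_pow r (r - j)
      _ = j.factorial * r ^ r := by rw [mul_assoc, ← pow_add, Nat.sub_add_cancel hjr]

theorem choose_mul_pow_mul_pow_le {r s j k : ℕ} (h : j + k = r + s) :
    (r + s).choose j * (r ^ j * s ^ k) ≤ (r + s).choose r * (r ^ r * s ^ s) := by
  have hchoose_j := Nat.add_choose_mul_factorial_mul_factorial k j
  have hchoose_r := Nat.add_choose_mul_factorial_mul_factorial s r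
  rw [add_comm k j, h] at hchoose_j
  rw [add_comm s r] at hchoose_r
  refine Nat.le_of_mul_le_mul_left ?_
    (by positivity : 0 < j.factorial * k.factorial * (r.factorial * s.factorial))
  calc j.factorial * k.factorial * (r.factorial * s.factorial) *
        ((r + s).choose j * (r ^ j * s ^ k))
      = (r + s).factorial * ((r.factorial * r ^ j) * (s.factorial * s ^ k)) := by
        rw [← hchoose_j]; ring
    _ ≤ (r + s).factorial * ((j.factorial * r ^ r) * (k.factorial * s ^ s)) := by
        exact Nat.mul_le_mul_left _ (Nat.mul_le_mul
          (factorial_mul_pow_le_factorial_mul_pow_self r j)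
          (factorial_mul_pow_le_factorial_mul_pow_self s k))
    _ = j.factorial * k.factorial * (r.factorial * s.factorial) *
        ((r + s).choose r * (r ^ r * s ^ s)) := by
        rw [← hchoose_r]; ring

theorem add_pow_self_le_mul_choose (r s : ℕ) :
    (r + s) ^ (r + s) ≤ (r + s + 1) * ((r + s).choose r * (r ^ r * s ^ s)) := by
  rw [(Commute.all r s).add_pow', ← Finset.Nat.card_antidiagonal (r + s), ← smul_eq_mul]
  refine Finset.sum_le_card_nsmul _ _ _ fun p hp => ?_
  exact choose_mul_pow_mul_pow_le (Finset.HasAntidiagonal.mem_antidiagonal.1 hp)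

theorem sum_prod_hammingNorm_le_eq_sum_prod_card_le {ι α R : Type*} [Fintype ι] [DecidableEq ι]
    [Fintype α] [Zero α] [DecidableEq α] [CommSemiring R] {g : ι → α → R} (hg : ∀ i, g i 0 = 1)
    (r : ℕ) :
    ∑ v : ι → α with hammingNorm v ≤ r, ∏ i, g i (v i) =
      ∑ S : Finset ι with #S ≤ r, ∏ i ∈ S, ∑ x ∈ univ.erase 0, g i x := by
  rw [← Finset.sum_fiberwise_of_maps_to (t := {S : Finset ι | #S ≤ r})
    (g := fun v : ι → α => ({i | v i ≠ 0} : Finset ι))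
    (fun v hv => by simpa [hammingNorm] using hv)]
  refine Finset.sum_congr rfl fun S hS => ?_
  have fiber_eq : ({v : ι → α | hammingNorm v ≤ r} : Finset (ι → α)).filter
      (fun v => ({i | v i ≠ 0} : Finset ι) = S) =
      Fintype.piFinset fun i => if i ∈ S then univ.erase 0 else {0} := by
    ext v
    have mem_iff : v ∈ Fintype.piFinset (fun i => if i ∈ S then univ.erase (0 : α) else {0}) ↔
        ({i | v i ≠ 0} : Finset ι) = S := by
      simp only [Fintype.mem_piFinset, Finset.ext_iff, Finset.mem_filter, Finset.mem_univ,
        true_and]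
      refine forall_congr' fun i => ?_
      by_cases hi : i ∈ S <;> simp [hi]
    rw [mem_iff, Finset.mem_filter, and_iff_right_iff_imp]
    rintro rfl
    simpa [hammingNorm] using hS
  rw [fiber_eq, ← Finset.prod_univ_sum, ← Finset.prod_subset (Finset.subset_univ S)]
  · exact Finset.prod_congr rfl fun i hi => by rw [if_pos hi]
  · intro i _ hi
    rw [if_neg hi, Finset.sum_singleton, hg]

theorem pow_mul_pow_mul_sum_prod_card_le_le_prod_add {ι R : Type*} [Fintype ι] [CommSemiring R]
    [LinearOrder R] [IsStrictOrderedRing R] {c : ι → R} (hc : ∀ i, 0 ≤ c i)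
    {a b : R} (ha : 0 ≤ a) (hab : a ≤ b) {r s : ℕ} (hrs : r + s = Fintype.card ι) :
    a ^ r * b ^ s * ∑ S : Finset ι with #S ≤ r, ∏ i ∈ S, c i ≤ ∏ i, (a * c i + b) := by
  rw [Fintype.prod_add, Finset.mul_sum]
  refine (Finset.sum_le_sum fun S hS => ?_).trans
    (Finset.sum_le_sum_of_subset_of_nonneg (Finset.filter_subset _ _) fun S _ _ => ?_)
  · have hSr : #S ≤ r := (Finset.mem_filter.1 hS).2
    have hScompl : #Sᶜ = (r - #S) + s := by rw [Finset.card_compl]; omega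
    rw [Finset.prod_mul_distrib, Finset.prod_const, Finset.prod_const, hScompl]
    calc a ^ r * b ^ s * ∏ i ∈ S, c i
        = a ^ #S * (a ^ (r - #S) * b ^ s) * ∏ i ∈ S, c i := by
          rw [← mul_assoc, ← pow_add, Nat.add_sub_cancel' hSr]
      _ ≤ a ^ #S * (b ^ (r - #S) * b ^ s) * ∏ i ∈ S, c i := by
          gcongr
          · exact Finset.prod_nonneg fun i _ => hc i
          · exact pow_nonneg (ha.trans hab) s
      _ = a ^ #S * (∏ i ∈ S, c i) * b ^ (r - #S + s) := by rw [pow_add]; ring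
  · exact mul_nonneg (Finset.prod_nonneg fun i _ => mul_nonneg ha (hc i))
      (Finset.prod_nonneg fun _ _ => ha.trans hab)

theorem prod_ite_eq_zero_one {ι α R : Type*} [Fintype ι] [Zero α] [DecidableEq α] [CommMonoid R]
    (v : ι → α) (ρ : R) : ∏ i, (if v i = 0 then 1 else ρ) = ρ ^ hammingNorm v := by
  rw [Finset.prod_ite, Finset.prod_const_one, one_mul, Finset.prod_const, hammingNorm]

theorem one_sub_mul_div_nonneg {Q a b : ℝ} (hQ : 1 ≤ Q) (ha : 0 ≤ a) (hab : a ≤ b) :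
    0 ≤ 1 - (1 - 1 / Q) * (a / b) :=
  have hb : 0 ≤ b := ha.trans hab
  sub_nonneg.2 (mul_le_one₀ (sub_le_self _ (by positivity)) (by positivity)
    (div_le_one_of_le₀ hab hb))

theorem sum_prod_ite_eq_zero_card_le_le {ι α : Type*} [Fintype ι] [Zero α] [DecidableEq α]
    (w : ι → α) {Q : ℝ} (hQ : 1 ≤ Q) {r s : ℕ} (hcard : r + s = Fintype.card ι)
    (hrs : r ≤ Q * s) :
    ∑ S : Finset ι with #S ≤ r, ∏ i ∈ S, (if w i = 0 then Q else 1) ≤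
      (r + s + 1) * (1 - (1 - 1 / Q) * (r / (r + s))) ^ hammingNorm w *
        ((r + s).choose r * Q ^ r) := by
  have hQ0 : 0 < Q := zero_lt_one.trans_le hQ
  set ρ : ℝ := 1 - (1 - 1 / Q) * (r / (r + s)) with hρ
  have hρ0 : 0 ≤ ρ :=
    one_sub_mul_div_nonneg hQ r.cast_nonneg (le_add_of_nonneg_right s.cast_nonneg)
  have hpos : (0 : ℝ) < r ^ r * (Q * s) ^ s := by
    rw [mul_pow]
    exact mul_pos (mod_cast Nat.pow_self_pos)
      (mul_pos (pow_pos hQ0 s) (mod_cast Nat.pow_self_pos))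
  have factor_eq (i : ι) :
      r * (if w i = 0 then Q else 1) + Q * s = Q * (r + s) * if w i = 0 then 1 else ρ := by
    have hne : (r + s : ℝ) ≠ 0 := mod_cast (hcard.trans_gt (Fintype.card_pos_iff.2 ⟨i⟩)).ne'
    split_ifs
    · ring
    · rw [hρ]
      field_simp
      ring
  have add_pow_self_le :
      ((r : ℝ) + s) ^ (r + s) ≤ (r + s + 1) * ((r + s).choose r * (r ^ r * s ^ s)) :=
    mod_cast add_pow_self_le_mul_choose r s
  -- With the weights `r` and `Q * s` below, the expanded product has for `w = 0` its largest term
  -- at size `r`, so truncating it to the sizes `≤ r` costs only a factor `r + s + 1`.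
  refine le_of_mul_le_mul_left ?_ hpos
  calc r ^ r * (Q * s) ^ s * ∑ S : Finset ι with #S ≤ r, ∏ i ∈ S, (if w i = 0 then Q else 1)
      ≤ ∏ i, (r * (if w i = 0 then Q else 1) + Q * s) :=
        pow_mul_pow_mul_sum_prod_card_le_le_prod_add (fun i => by split_ifs <;> positivity)
          r.cast_nonneg hrs hcard
    _ = Q ^ (r + s) * (r + s) ^ (r + s) * ρ ^ hammingNorm w := by
        simp_rw [factor_eq]
        rw [Finset.prod_mul_distrib, prod_ite_eq_zero_one, Finset.prod_const, Finset.card_univ,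
          ← hcard, mul_pow]
    _ ≤ Q ^ (r + s) * ((r + s + 1) * ((r + s).choose r * (r ^ r * s ^ s))) * ρ ^ hammingNorm w := by
        gcongr
    _ = r ^ r * (Q * s) ^ s * ((r + s + 1) * ρ ^ hammingNorm w * ((r + s).choose r * Q ^ r)) := by
        ring

theorem card_le_card_mul_card_filter_map_eq_zero {V W : Type*} [AddGroup V] [AddGroup W]
    [Fintype W] [DecidableEq W] (f : V →+ W) {s t : Finset V}
    (hst : ∀ x ∈ s, ∀ y ∈ s, x - y ∈ t) :
    #s ≤ #{v ∈ t | f v = 0} * Fintype.card W := by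
  refine Finset.card_le_mul_card_image_of_maps_to (f := f) (fun _ _ => Finset.mem_univ _) _
    fun w _ => ?_
  rcases Finset.eq_empty_or_nonempty {v ∈ s | f v = w} with hempty | ⟨x, hx⟩
  · simp [hempty]
  · rw [Finset.mem_filter] at hx
    refine Finset.card_le_card_of_injOn (fun v => v - x) (fun v hv => ?_)
      (sub_left_injective.injOn)
    obtain ⟨hv, hfv⟩ := Finset.mem_filter.1 hv
    exact Finset.mem_filter.2 ⟨hst v hv x hx.1, by rw [map_sub, hfv, hx.2, sub_self]⟩

end Combinatorics

section Volume

theorem volS_eq_sum_finset (q n r : ℕ) :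
    volS q n r = ∑ S : Finset (Fin n) with #S ≤ r, (q ^ 2 - 1) ^ #S := by
  rw [← Finset.sum_fiberwise_of_maps_to (g := Finset.card) (t := range (r + 1)) (by simp)]
  refine Finset.sum_congr rfl fun k hk => ?_
  have fiber_eq : ({S : Finset (Fin n) | #S ≤ r} : Finset _).filter (fun S => #S = k) =
      powersetCard k univ := by
    ext S
    simp only [Finset.mem_filter, Finset.mem_univ, true_and, Finset.mem_powersetCard_univ,
      and_iff_right_iff_imp]
    rintro rfl
    exact Finset.mem_range_succ_iff.1 hk
  rw [fiber_eq, Finset.sum_powersetCard, Finset.card_univ, Fintype.card_fin, smul_eq_mul]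

theorem choose_mul_pow_le_volS (q n : ℕ) {i r : ℕ} (hir : i ≤ r) :
    n.choose i * (q ^ 2 - 1) ^ i ≤ volS q n r :=
  Finset.single_le_sum (f := fun i => n.choose i * (q ^ 2 - 1) ^ i) (fun _ _ => Nat.zero_le _)
    (Finset.mem_range_succ_iff.2 hir)

theorem volS_pos (q n r : ℕ) : 0 < volS q n r :=
  (by simp : 0 < n.choose 0 * (q ^ 2 - 1) ^ 0).trans_le
    (choose_mul_pow_le_volS q n (Nat.zero_le r))

theorem pow_two_mul_le_volS {q n m : ℕ} (hq : 1 ≤ q) (hm : m ≤ n) : q ^ (2 * m) ≤ volS q n m := by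
  calc q ^ (2 * m) = (q ^ 2 - 1 + 1) ^ m := by
        rw [Nat.sub_add_cancel (Nat.one_le_pow _ _ hq), pow_mul]
    _ = ∑ i ∈ range (m + 1), m.choose i * (q ^ 2 - 1) ^ i := by
        simp [add_pow, mul_comm]
    _ ≤ volS q n m := Finset.sum_le_sum fun i _ =>
        Nat.mul_le_mul_right _ (Nat.choose_le_choose i hm)

/-- A Chernoff bound: weigh every vector of weight `i` by `exp (s * (r - i)) ≥ 1`. -/
theorem volS_le_exp (q n r : ℕ) {s : ℝ} (hs : 0 ≤ s) :
    (volS q n r : ℝ) ≤ Real.exp ((q ^ 2 - 1 : ℕ) * Real.exp (-s) * n + s * r) := by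
  set Q : ℝ := ((q ^ 2 - 1 : ℕ) : ℝ)
  have weight_le (S : Finset (Fin n)) (hS : S ∈ ({S | #S ≤ r} : Finset (Finset (Fin n)))) :
      Q ^ #S ≤ Real.exp (s * r) * (Q * Real.exp (-s)) ^ #S := by
    have hSr : (#S : ℝ) ≤ r := mod_cast (Finset.mem_filter.1 hS).2
    calc Q ^ #S ≤ Q ^ #S * Real.exp (s * r - s * #S) :=
          le_mul_of_one_le_right (by positivity)
            (Real.one_le_exp (sub_nonneg.2 (mul_le_mul_of_nonneg_left hSr hs)))
      _ = Real.exp (s * r) * (Q * Real.exp (-s)) ^ #S := by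
          rw [mul_pow, ← Real.exp_nat_mul, sub_eq_add_neg, Real.exp_add]
          ring_nf
  calc (volS q n r : ℝ) = ∑ S : Finset (Fin n) with #S ≤ r, Q ^ #S := by
        rw [volS_eq_sum_finset]
        push_cast
        rfl
    _ ≤ ∑ S : Finset (Fin n), Real.exp (s * r) * (Q * Real.exp (-s)) ^ #S :=
        (Finset.sum_le_sum weight_le).trans
          (Finset.sum_le_sum_of_subset_of_nonneg (Finset.filter_subset _ _)
            fun S _ _ => by positivity)
    _ = Real.exp (s * r) * (Q * Real.exp (-s) + 1) ^ n := by
        rw [← Finset.mul_sum]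
        congr 1
        simpa using Fintype.sum_pow_mul_eq_add_pow (Fin n) (Q * Real.exp (-s)) 1
    _ ≤ Real.exp (s * r) * Real.exp (Q * Real.exp (-s)) ^ n := by
        gcongr
        exact Real.add_one_le_exp _
    _ = Real.exp (Q * Real.exp (-s) * n + s * r) := by
        rw [← Real.exp_nat_mul, ← Real.exp_add]
        ring_nf

theorem exists_volS_floor_le_exp (q : ℕ) {γ : ℝ} (hγ : 0 < γ) :
    ∃ ε : ℝ, 0 < ε ∧ ∀ n : ℕ, (volS q n ⌊ε * n⌋₊ : ℝ) ≤ Real.exp (γ * n) := by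
  have tendsto_zero : Tendsto (fun s => ((q ^ 2 - 1 : ℕ) : ℝ) * Real.exp (-s)) atTop (𝓝 0) := by
    simpa using Real.tendsto_exp_neg_atTop_nhds_zero.const_mul ((q ^ 2 - 1 : ℕ) : ℝ)
  obtain ⟨s, hQs, hs⟩ :=
    ((tendsto_zero.eventually_le_const (half_pos hγ)).and (eventually_gt_atTop 0)).exists
  refine ⟨γ / 2 / s, by positivity, fun n => (volS_le_exp q n _ hs.le).trans ?_⟩
  have hfloor : (⌊γ / 2 / s * n⌋₊ : ℝ) ≤ γ / 2 / s * n := Nat.floor_le (by positivity)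
  refine Real.exp_le_exp.2 ?_
  calc ((q ^ 2 - 1 : ℕ) : ℝ) * Real.exp (-s) * n + s * ⌊γ / 2 / s * n⌋₊
      ≤ γ / 2 * n + s * (γ / 2 / s * n) := by gcongr
    _ = γ * n := by field_simp; ring

end Volume

section SymplecticSpace

variable {F : Type} [Field F] {n : ℕ}

section SymplecticForm

/-- The symplectic inner product as a bilinear form, which gives access to the linear-algebra
library. -/
def sympForm (F : Type) [Field F] (n : ℕ) : LinearMap.BilinForm F (Fin n → F × F) :=
  LinearMap.mk₂ F sympInner
    (fun u u' v => by
      simp only [sympInner, ← Finset.sum_add_distrib, Pi.add_apply, Prod.fst_add, Prod.snd_add]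
      exact Finset.sum_congr rfl fun i _ => by ring)
    (fun c u v => by
      simp only [sympInner, Finset.mul_sum, Pi.smul_apply, Prod.smul_fst, Prod.smul_snd,
        smul_eq_mul]
      exact Finset.sum_congr rfl fun i _ => by ring)
    (fun u v v' => by
      simp only [sympInner, ← Finset.sum_add_distrib, Pi.add_apply, Prod.fst_add, Prod.snd_add]
      exact Finset.sum_congr rfl fun i _ => by ring)
    (fun c u v => by
      simp only [sympInner, Finset.mul_sum, Pi.smul_apply, Prod.smul_fst, Prod.smul_snd,
        smul_eq_mul]
      exact Finset.sum_congr rfl fun i _ => by ring)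

@[simp]
theorem sympForm_apply (u v : Fin n → F × F) : sympForm F n u v = sympInner u v := rfl

theorem sympForm_isAlt : (sympForm F n).IsAlt := fun u => by
  rw [sympForm_apply, sympInner]
  exact Finset.sum_eq_zero fun i _ => by ring

theorem sympInner_sum_smul {ℓ : ℕ} (a : Fin ℓ → F) (u : Fin ℓ → Fin n → F × F)
    (v : Fin n → F × F) : sympInner (∑ i, a i • u i) v = ∑ i, a i * sympInner (u i) v := by
  simp only [← sympForm_apply, map_sum, map_smul, LinearMap.sum_apply, LinearMap.smul_apply,
    smul_eq_mul]

end SymplecticForm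

variable [Fintype F] [DecidableEq F]

section SymplecticBall

theorem mem_sympBall {r : ℕ} {v : Fin n → F × F} : v ∈ sympBall F n r ↔ sympWt v ≤ r := by
  rw [sympBall, Finset.mem_filter, and_iff_right (Finset.mem_univ v)]

theorem sympBall_eq_filter_hammingNorm (r : ℕ) :
    sympBall F n r = ({v | hammingNorm v ≤ r} : Finset (Fin n → F × F)) := by
  ext v
  rw [mem_sympBall, Finset.mem_filter, and_iff_right (Finset.mem_univ v), sympWt]

theorem card_univ_erase_zero_prod : #(univ.erase (0 : F × F)) = Fintype.card F ^ 2 - 1 := by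
  rw [Finset.card_erase_of_mem (Finset.mem_univ _), Finset.card_univ, Fintype.card_prod, sq]

theorem card_sympBall (r : ℕ) : #(sympBall F n r) = volS (Fintype.card F) n r := by
  have hsum := sum_prod_hammingNorm_le_eq_sum_prod_card_le (ι := Fin n)
    (g := fun _ (_ : F × F) => 1) (fun _ => rfl) r
  simpa only [Finset.prod_const_one, Finset.sum_const, smul_eq_mul, mul_one, Finset.prod_const,
    card_univ_erase_zero_prod, ← volS_eq_sum_finset, ← sympBall_eq_filter_hammingNorm] using hsum

theorem sub_mem_sympBall {r : ℕ} {x y : Fin n → F × F} (hx : x ∈ sympBall F n (r / 2))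
    (hy : y ∈ sympBall F n (r / 2)) : x - y ∈ sympBall F n r := by
  rw [mem_sympBall, sympWt] at *
  have triangle := hammingDist_triangle y 0 x
  rw [hammingDist_zero_right, hammingDist_zero_left, hammingDist_eq_hammingNorm,
    neg_add_eq_sub] at triangle
  omega

end SymplecticBall

section FourierTransform

theorem addChar_map_sum {ι A M : Type*} [AddCommMonoid A] [CommMonoid M] (ψ : AddChar A M)
    (f : ι → A) (s : Finset ι) : ψ (∑ i ∈ s, f i) = ∏ i ∈ s, ψ (f i) :=
  map_prod ψ.toMonoidHom (fun i => Multiplicative.ofAdd (f i)) s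

variable (ψ : AddChar F ℂ)

/-- The Fourier transform of the indicator function of the symplectic ball of radius `r`, with
respect to the pairing of `F^{2n}` with itself given by the symplectic inner product and `ψ`. -/
noncomputable def ballFourier (r : ℕ) (w : Fin n → F × F) : ℂ :=
  ∑ v ∈ sympBall F n r, ψ (sympInner w v)

theorem ballFourier_zero (r : ℕ) :
    ballFourier ψ r (0 : Fin n → F × F) = volS (Fintype.card F) n r := by
  simp [ballFourier, sympInner, card_sympBall]

/-- The part of the symplectic ball of radius `r` that is orthogonal to all `u i`. -/
noncomputable def orthSection {ℓ : ℕ} (r : ℕ) (u : Fin ℓ → Fin n → F × F) :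
    Finset (Fin n → F × F) :=
  {v ∈ sympBall F n r | ∀ i, sympInner (u i) v = 0}

variable {ψ}

theorem norm_sum_erase_zero (hψ : ψ.IsPrimitive) (w : F × F) :
    ‖∑ x ∈ univ.erase (0 : F × F), ψ (w.1 * x.2 - w.2 * x.1)‖ =
      if w = 0 then ((Fintype.card F ^ 2 - 1 : ℕ) : ℝ) else 1 := by
  split_ifs with hw
  · simp only [hw, Prod.fst_zero, Prod.snd_zero, zero_mul, sub_zero, AddChar.map_zero_eq_one,
      Finset.sum_const, card_univ_erase_zero_prod, nsmul_eq_mul, mul_one, Complex.norm_natCast]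
  · have sum_eq_zero : ∑ x : F × F, ψ (w.1 * x.2 - w.2 * x.1) = 0 := by
      have split_coord (x : F × F) :
          ψ (w.1 * x.2 - w.2 * x.1) = ψ (x.1 * -w.2) * ψ (x.2 * w.1) := by
        rw [← AddChar.map_add_eq_mul]
        ring_nf
      simp_rw [split_coord, Fintype.sum_prod_type, ← Finset.mul_sum, ← Finset.sum_mul,
        AddChar.sum_mulShift _ hψ, neg_eq_zero]
      rcases not_and_or.1 (mt Prod.mk_eq_zero.2 hw) with h | h
      · rw [if_neg h, Nat.cast_zero, mul_zero]
      · rw [if_neg h, Nat.cast_zero, zero_mul]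
    rw [Finset.sum_erase_eq_sub (Finset.mem_univ _), sum_eq_zero]
    simp

theorem norm_ballFourier_le_sum (hψ : ψ.IsPrimitive) (r : ℕ) (w : Fin n → F × F) :
    ‖ballFourier ψ r w‖ ≤ ∑ S : Finset (Fin n) with #S ≤ r,
      ∏ i ∈ S, if w i = 0 then ((Fintype.card F ^ 2 - 1 : ℕ) : ℝ) else 1 := by
  have map_sympInner (v : Fin n → F × F) :
      ψ (sympInner w v) = ∏ i, ψ ((w i).1 * (v i).2 - (w i).2 * (v i).1) := by
    rw [sympInner, addChar_map_sum]
  simp_rw [ballFourier, map_sympInner]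
  rw [sympBall_eq_filter_hammingNorm,
    sum_prod_hammingNorm_le_eq_sum_prod_card_le
      (g := fun i (x : F × F) => ψ ((w i).1 * x.2 - (w i).2 * x.1)) (by simp)]
  refine (norm_sum_le _ _).trans_eq (Finset.sum_congr rfl fun S _ => ?_)
  rw [norm_prod]
  exact Finset.prod_congr rfl fun i _ => norm_sum_erase_zero hψ (w i)

theorem norm_ballFourier_le (hψ : ψ.IsPrimitive) {r : ℕ}
    (hr : r * Fintype.card F ^ 2 ≤ (Fintype.card F ^ 2 - 1) * n) (w : Fin n → F × F) :
    ‖ballFourier ψ r w‖ ≤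
      (n + 1) * (1 - (1 - 1 / (Fintype.card F ^ 2 - 1 : ℕ)) * (r / n)) ^ sympWt w *
        volS (Fintype.card F) n r := by
  set Q : ℕ := Fintype.card F ^ 2 - 1 with hQ
  have hq : 2 ^ 2 ≤ Fintype.card F ^ 2 := Nat.pow_le_pow_left Fintype.one_lt_card 2
  have hQ1 : (1 : ℝ) ≤ Q := mod_cast (by omega : 1 ≤ Q)
  have hrQ : r + Q * r ≤ Q * n := by
    calc r + Q * r = r * (Q + 1) := by ring
      _ ≤ Q * n := by rwa [hQ, Nat.sub_add_cancel (by omega)]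
  have hrn : r ≤ n := Nat.le_of_mul_le_mul_left (by omega : Q * r ≤ Q * n) (by omega)
  obtain ⟨s, rfl⟩ := Nat.exists_eq_add_of_le hrn
  have hrs : (r : ℝ) ≤ Q * s := mod_cast (by rw [mul_add] at hrQ; omega : r ≤ Q * s)
  have hmode : (((r + s).choose r * Q ^ r : ℕ) : ℝ) ≤ volS (Fintype.card F) (r + s) r :=
    mod_cast choose_mul_pow_le_volS (Fintype.card F) (r + s) le_rfl
  push_cast at hmode ⊢
  have hbound := (norm_ballFourier_le_sum hψ r w).trans
    (sum_prod_ite_eq_zero_card_le_le w hQ1 (Fintype.card_fin _).symm hrs)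
  refine hbound.trans (mul_le_mul_of_nonneg_left hmode ?_)
  have hρ :=
    one_sub_mul_div_nonneg hQ1 r.cast_nonneg (le_add_of_nonneg_right (s.cast_nonneg (α := ℝ)))
  positivity

theorem card_pow_mul_card_orthSection (hψ : ψ.IsPrimitive) {ℓ : ℕ} (r : ℕ)
    (u : Fin ℓ → Fin n → F × F) :
    (Fintype.card F : ℂ) ^ ℓ * #(orthSection r u) =
      ∑ a : Fin ℓ → F, ballFourier ψ r (∑ i, a i • u i) := by
  have orthogonality (v : Fin n → F × F) :
      ∑ a : Fin ℓ → F, ψ (sympInner (∑ i, a i • u i) v) =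
        if ∀ i, sympInner (u i) v = 0 then (Fintype.card F : ℂ) ^ ℓ else 0 := by
    simp_rw [sympInner_sum_smul, addChar_map_sum]
    have prod_sum := Finset.prod_univ_sum (fun _ : Fin ℓ => (univ : Finset F))
      fun i x => ψ (x * sympInner (u i) v)
    rw [Fintype.piFinset_univ] at prod_sum
    rw [← prod_sum]
    simp_rw [AddChar.sum_mulShift _ hψ, Nat.cast_ite, Nat.cast_zero]
    split_ifs with h
    · simp [h]
    · obtain ⟨i, hi⟩ := not_forall.1 h
      exact Finset.prod_eq_zero (Finset.mem_univ i) (if_neg hi)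
  simp_rw [ballFourier]
  rw [Finset.sum_comm]
  simp_rw [orthogonality]
  rw [Finset.sum_ite, Finset.sum_const_zero, add_zero, Finset.sum_const, nsmul_eq_mul, mul_comm,
    orthSection]

theorem abs_card_pow_mul_card_orthSection_sub_volS_le (hψ : ψ.IsPrimitive) {ℓ r : ℕ}
    {u : Fin ℓ → Fin n → F × F} {E : ℝ} (hE : 0 ≤ E)
    (h : ∀ a : Fin ℓ → F, a ≠ 0 → ‖ballFourier ψ r (∑ i, a i • u i)‖ ≤ E) :
    |(Fintype.card F : ℝ) ^ ℓ * #(orthSection r u) - volS (Fintype.card F) n r| ≤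
      (Fintype.card F : ℝ) ^ ℓ * E := by
  have error_eq : (((Fintype.card F : ℝ) ^ ℓ * #(orthSection r u) -
      volS (Fintype.card F) n r : ℝ) : ℂ) =
      ∑ a ∈ univ.erase (0 : Fin ℓ → F), ballFourier ψ r (∑ i, a i • u i) := by
    push_cast
    rw [card_pow_mul_card_orthSection hψ, Finset.sum_erase_eq_sub (Finset.mem_univ _)]
    simp only [Pi.zero_apply, zero_smul, Finset.sum_const_zero, ballFourier_zero]
  rw [← Real.norm_eq_abs, ← Complex.norm_real, error_eq]
  calc ‖∑ a ∈ univ.erase (0 : Fin ℓ → F), ballFourier ψ r (∑ i, a i • u i)‖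
      ≤ ∑ _a ∈ univ.erase (0 : Fin ℓ → F), E :=
        norm_sum_le_of_le _ fun a ha => h a (Finset.ne_of_mem_erase ha)
    _ ≤ ∑ _a : Fin ℓ → F, E :=
        Finset.sum_le_sum_of_subset_of_nonneg (Finset.erase_subset _ _) fun _ _ _ => hE
    _ = (Fintype.card F : ℝ) ^ ℓ * E := by simp

end FourierTransform

section OrthogonalTuples

/-- The linearly independent, pairwise symplectically orthogonal `ℓ`-tuples of vectors of the
symplectic ball of radius `r`. -/
noncomputable def orthTuples (F : Type) [Field F] [Fintype F] [DecidableEq F] (n r ℓ : ℕ) :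
    Finset (Fin ℓ → Fin n → F × F) :=
  {u | (∀ i, u i ∈ sympBall F n r) ∧ LinearIndependent F u ∧ ∀ i j, sympInner (u i) (u j) = 0}

/-- The tuples in `orthTuples F n r ℓ` with a nontrivial linear combination of symplectic weight
at most `K`; every tuple violating the two-sided estimate is one of these. -/
noncomputable def lightTuples (F : Type) [Field F] [Fintype F] [DecidableEq F] (n r ℓ K : ℕ) :
    Finset (Fin ℓ → Fin n → F × F) :=
  {u ∈ orthTuples F n r ℓ | ∃ a : Fin ℓ → F, a ≠ 0 ∧ sympWt (∑ i, a i • u i) ≤ K}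

variable {r ℓ : ℕ}

theorem mem_orthTuples {u : Fin ℓ → Fin n → F × F} :
    u ∈ orthTuples F n r ℓ ↔ (∀ i, u i ∈ sympBall F n r) ∧ LinearIndependent F u ∧
      ∀ i j, sympInner (u i) (u j) = 0 := by
  rw [orthTuples, Finset.mem_filter, and_iff_right (Finset.mem_univ u)]

theorem removeNth_mem_orthTuples {u : Fin (ℓ + 1) → Fin n → F × F}
    (hu : u ∈ orthTuples F n r (ℓ + 1)) (j : Fin (ℓ + 1)) :
    j.removeNth u ∈ orthTuples F n r ℓ := by
  obtain ⟨hball, hindep, horth⟩ := mem_orthTuples.1 hu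
  exact mem_orthTuples.2 ⟨fun i => hball _, hindep.comp _ Fin.succAbove_right_injective,
    fun i k => horth _ _⟩

theorem card_filter_sympWt_sum_smul_le {a : Fin (ℓ + 1) → F} (ha : a ≠ 0) (K : ℕ) :
    #{u ∈ orthTuples F n r (ℓ + 1) | sympWt (∑ i, a i • u i) ≤ K} ≤
      volS (Fintype.card F) n K * #(orthTuples F n r ℓ) := by
  obtain ⟨j, hj⟩ := Function.ne_iff.1 ha
  rw [← card_sympBall, ← Finset.card_product]
  -- As `a j ≠ 0`, the entry `u j` is recovered from the combination and the other entries.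
  refine Finset.card_le_card_of_injOn (fun u => (∑ i, a i • u i, j.removeNth u)) ?_ ?_
  · intro u hu
    obtain ⟨hu, hlight⟩ := Finset.mem_filter.1 hu
    exact Finset.mem_product.2 ⟨mem_sympBall.2 hlight, removeNth_mem_orthTuples hu j⟩
  · intro u _ u' _ heq
    obtain ⟨hcomb, hrest⟩ := Prod.mk.inj heq
    have hothers (i : Fin ℓ) : u (j.succAbove i) = u' (j.succAbove i) := congrFun hrest i
    simp only [Fin.sum_univ_succAbove _ j, hothers, add_left_inj] at hcomb
    funext i
    rcases Fin.eq_self_or_eq_succAbove j i with rfl | ⟨k, rfl⟩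
    · exact smul_right_injective _ hj hcomb
    · exact hothers k

theorem card_lightTuples_succ_le (r ℓ K : ℕ) :
    #(lightTuples F n r (ℓ + 1) K) ≤
      Fintype.card F ^ (ℓ + 1) * (volS (Fintype.card F) n K * #(orthTuples F n r ℓ)) := by
  have hunion : lightTuples F n r (ℓ + 1) K ⊆ (univ.erase (0 : Fin (ℓ + 1) → F)).biUnion
      fun a => {u ∈ orthTuples F n r (ℓ + 1) | sympWt (∑ i, a i • u i) ≤ K} := by
    intro u hu
    obtain ⟨hu, a, ha, hlight⟩ := Finset.mem_filter.1 hu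
    exact Finset.mem_biUnion.2
      ⟨a, Finset.mem_erase.2 ⟨ha, Finset.mem_univ a⟩, Finset.mem_filter.2 ⟨hu, hlight⟩⟩
  have hcard : #(univ.erase (0 : Fin (ℓ + 1) → F)) ≤ Fintype.card F ^ (ℓ + 1) :=
    (Finset.card_erase_le).trans_eq (by simp)
  exact (Finset.card_le_card hunion).trans <|
    (Finset.card_biUnion_le_card_mul _ _ _ fun _ ha =>
      card_filter_sympWt_sum_smul_le (Finset.ne_of_mem_erase ha) K).trans
    (Nat.mul_le_mul_right _ hcard)

theorem lightTuples_zero (r K : ℕ) : lightTuples F n r 0 K = ∅ :=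
  Finset.filter_eq_empty_iff.2 fun _ _ ⟨a, ha, _⟩ => ha (Subsingleton.elim a 0)

theorem volS_div_two_le_card_orthSection_mul (r : ℕ) (u : Fin ℓ → Fin n → F × F) :
    volS (Fintype.card F) n (r / 2) ≤ #(orthSection r u) * Fintype.card F ^ ℓ := by
  have hpigeonhole := card_le_card_mul_card_filter_map_eq_zero
    (LinearMap.pi fun i => sympForm F n (u i)).toAddMonoidHom
    fun x hx y hy => sub_mem_sympBall (r := r) hx hy
  simpa [card_sympBall, orthSection, funext_iff] using hpigeonhole

theorem card_orthSection_le (r : ℕ) (u : Fin ℓ → Fin n → F × F) :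
    #(orthSection r u) ≤
      #{v ∈ orthSection r u | v ∉ Submodule.span F (Set.range u)} + Fintype.card F ^ ℓ := by
  have hspan : ({v ∈ orthSection r u | v ∈ Submodule.span F (Set.range u)} : Finset _) ⊆
      univ.image fun a : Fin ℓ → F => ∑ i, a i • u i := by
    intro v hv
    obtain ⟨a, ha⟩ := Submodule.mem_span_range_iff_exists_fun F |>.1 (Finset.mem_filter.1 hv).2
    exact Finset.mem_image.2 ⟨a, Finset.mem_univ a, ha⟩
  have hcard : #{v ∈ orthSection r u | v ∈ Submodule.span F (Set.range u)} ≤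
      Fintype.card F ^ ℓ :=
    ((Finset.card_le_card hspan).trans Finset.card_image_le).trans_eq (by simp)
  rw [← Finset.card_filter_add_card_filter_not (s := orthSection r u)
    (· ∈ Submodule.span F (Set.range u)), add_comm]
  exact Nat.add_le_add_left hcard _

theorem cons_mem_orthTuples {u : Fin ℓ → Fin n → F × F} (hu : u ∈ orthTuples F n r ℓ)
    {v : Fin n → F × F} (hv : v ∈ orthSection r u)
    (hspan : v ∉ Submodule.span F (Set.range u)) :
    (Fin.cons v u : Fin (ℓ + 1) → Fin n → F × F) ∈ orthTuples F n r (ℓ + 1) := by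
  obtain ⟨hball, hindep, horth⟩ := mem_orthTuples.1 hu
  obtain ⟨hvball, hvorth⟩ := Finset.mem_filter.1 hv
  have hvorth' (i : Fin ℓ) : sympInner v (u i) = 0 :=
    (sympForm_isAlt.neg_eq (u i) v).symm.trans (neg_eq_zero.2 (hvorth i))
  refine mem_orthTuples.2 ⟨Fin.cases hvball hball,
    linearIndependent_finCons.2 ⟨hindep, hspan⟩,
    Fin.cases (Fin.cases (sympForm_isAlt v) hvorth') fun i => Fin.cases (hvorth i) (horth i)⟩

theorem sum_card_filter_notMem_span_le (r ℓ : ℕ) :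
    ∑ u ∈ orthTuples F n r ℓ, #{v ∈ orthSection r u | v ∉ Submodule.span F (Set.range u)} ≤
      #(orthTuples F n r (ℓ + 1)) := by
  rw [← Finset.card_sigma]
  refine Finset.card_le_card_of_injOn
    (fun p => (Fin.cons p.2 p.1 : Fin (ℓ + 1) → Fin n → F × F)) ?_ ?_
  · intro p hp
    obtain ⟨hu, hv⟩ := Finset.mem_sigma.1 hp
    obtain ⟨hv, hspan⟩ := Finset.mem_filter.1 hv
    exact cons_mem_orthTuples hu hv hspan
  · rintro ⟨u, v⟩ _ ⟨u', v'⟩ _ h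
    obtain ⟨rfl, rfl⟩ := Fin.cons_injective2 h
    rfl

theorem volS_div_two_mul_card_orthTuples_le (r ℓ : ℕ) :
    volS (Fintype.card F) n (r / 2) * #(orthTuples F n r ℓ) ≤
      Fintype.card F ^ ℓ *
        (#(orthTuples F n r (ℓ + 1)) + Fintype.card F ^ ℓ * #(orthTuples F n r ℓ)) := by
  calc volS (Fintype.card F) n (r / 2) * #(orthTuples F n r ℓ)
      = ∑ u ∈ orthTuples F n r ℓ, volS (Fintype.card F) n (r / 2) := by
        rw [Finset.sum_const, smul_eq_mul, mul_comm]
    _ ≤ ∑ u ∈ orthTuples F n r ℓ, Fintype.card F ^ ℓ *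
          (#{v ∈ orthSection r u | v ∉ Submodule.span F (Set.range u)} + Fintype.card F ^ ℓ) := by
        refine Finset.sum_le_sum fun u _ => ?_
        rw [mul_comm]
        exact (volS_div_two_le_card_orthSection_mul r u).trans
          (Nat.mul_le_mul_right _ (card_orthSection_le r u))
    _ = Fintype.card F ^ ℓ * (∑ u ∈ orthTuples F n r ℓ,
          #{v ∈ orthSection r u | v ∉ Submodule.span F (Set.range u)} +
            Fintype.card F ^ ℓ * #(orthTuples F n r ℓ)) := by
        rw [← Finset.mul_sum, Finset.sum_add_distrib, Finset.sum_const, smul_eq_mul,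
          mul_comm #(orthTuples F n r ℓ)]
    _ ≤ _ := by
        gcongr
        exact sum_card_filter_notMem_span_le r ℓ

theorem mul_pow_mul_card_orthTuples_le {Y : ℝ}
    (h : (Fintype.card F : ℝ) ^ (2 * ℓ) * (Y + 1) ≤ volS (Fintype.card F) n (r / 2)) :
    Y * (Fintype.card F : ℝ) ^ ℓ * #(orthTuples F n r ℓ) ≤ #(orthTuples F n r (ℓ + 1)) := by
  have hstep : (volS (Fintype.card F) n (r / 2) : ℝ) * #(orthTuples F n r ℓ) ≤
      (Fintype.card F : ℝ) ^ ℓ *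
        (#(orthTuples F n r (ℓ + 1)) + (Fintype.card F : ℝ) ^ ℓ * #(orthTuples F n r ℓ)) :=
    mod_cast volS_div_two_mul_card_orthTuples_le r ℓ
  have hpos : (0 : ℝ) < (Fintype.card F : ℝ) ^ ℓ := mod_cast pow_pos Fintype.card_pos ℓ
  have hscaled := (mul_le_mul_of_nonneg_right h (Nat.cast_nonneg _)).trans hstep
  rw [show (Fintype.card F : ℝ) ^ (2 * ℓ) * (Y + 1) * #(orthTuples F n r ℓ) =
    (Fintype.card F : ℝ) ^ ℓ * (Y * (Fintype.card F : ℝ) ^ ℓ * #(orthTuples F n r ℓ) +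
      (Fintype.card F : ℝ) ^ ℓ * #(orthTuples F n r ℓ)) by ring] at hscaled
  exact le_of_add_le_add_right (le_of_mul_le_mul_left hscaled hpos)

theorem card_lightTuples_mul_le {K : ℕ} {X : ℝ} (hX : 1 ≤ X)
    (h : volS (Fintype.card F) n K * (Fintype.card F : ℝ) ^ (2 * ℓ) * X ≤
      volS (Fintype.card F) n (r / 2)) :
    #(lightTuples F n r ℓ K) * X ≤ #(orthTuples F n r ℓ) := by
  have hq : (2 : ℝ) ≤ Fintype.card F := mod_cast Fintype.one_lt_card (α := F)
  cases ℓ with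
  | zero => simp [lightTuples_zero]
  | succ ℓ =>
    have hlight : (#(lightTuples F n r (ℓ + 1) K) : ℝ) ≤
        (Fintype.card F : ℝ) ^ (ℓ + 1) *
          (volS (Fintype.card F) n K * #(orthTuples F n r ℓ)) :=
      mod_cast card_lightTuples_succ_le r ℓ K
    set q : ℝ := (Fintype.card F : ℝ)
    set W : ℝ := (volS (Fintype.card F) n K : ℝ)
    have hW : 1 ≤ W := Nat.one_le_cast.2 (volS_pos _ n K)
    have hroom : q ^ (2 * ℓ) * (W * X * q + 1) ≤ volS (Fintype.card F) n (r / 2) := by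
      refine le_trans ?_ h
      rw [show W * q ^ (2 * (ℓ + 1)) * X = q ^ (2 * ℓ) * (W * X * q ^ 2) by ring]
      gcongr
      have hWX : 1 ≤ W * X := one_le_mul_of_one_le_of_one_le hW hX
      have hqq : 1 ≤ q * (q - 1) := by nlinarith
      nlinarith [one_le_mul_of_one_le_of_one_le hWX hqq]
    calc #(lightTuples F n r (ℓ + 1) K) * X
        ≤ q ^ (ℓ + 1) * (W * #(orthTuples F n r ℓ)) * X := by
          gcongr
      _ = W * X * q * q ^ ℓ * #(orthTuples F n r ℓ) := by ring
      _ ≤ #(orthTuples F n r (ℓ + 1)) := mul_pow_mul_card_orthTuples_le hroom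

end OrthogonalTuples

section Asymptotics

theorem eventually_add_one_le_exp {b : ℝ} (hb : 0 < b) :
    ∀ᶠ n : ℕ in atTop, (n + 1 : ℝ) ≤ Real.exp (b * n) := by
  filter_upwards [tendsto_natCast_atTop_atTop.eventually_ge_atTop (2 / b ^ 2)] with n hn
  have hquadratic := Real.quadratic_le_exp_of_nonneg (by positivity : 0 ≤ b * n)
  have hlinear : (n : ℝ) ≤ (b * n) ^ 2 / 2 := by
    calc (n : ℝ) = n * (2 / b ^ 2) * b ^ 2 / 2 := by field_simp
      _ ≤ n * n * b ^ 2 / 2 := by gcongr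
      _ = (b * n) ^ 2 / 2 := by ring
  have hbn : 0 ≤ b * n := by positivity
  linarith

theorem norm_ballFourier_le_exp {ψ : AddChar F ℂ} (hψ : ψ.IsPrimitive) (hn : 0 < n) {r : ℕ}
    (hr : r * Fintype.card F ^ 2 ≤ (Fintype.card F ^ 2 - 1) * n) {η : ℝ} (hη : η * n ≤ r)
    (w : Fin n → F × F) :
    ‖ballFourier ψ r w‖ ≤
      (n + 1) * Real.exp (-(2 / 3 * η * sympWt w)) * volS (Fintype.card F) n r := by
  have hq : 2 ^ 2 ≤ Fintype.card F ^ 2 := Nat.pow_le_pow_left Fintype.one_lt_card 2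
  have hrn : r ≤ n := Nat.le_of_mul_le_mul_left
    (by rw [mul_comm]; exact hr.trans (Nat.mul_le_mul_right n (Nat.sub_le _ 1)))
    (by omega : 0 < Fintype.card F ^ 2)
  have hbound := norm_ballFourier_le hψ hr w
  have hQ : (3 : ℝ) ≤ (Fintype.card F ^ 2 - 1 : ℕ) := Nat.ofNat_le_cast.2 (by omega)
  set Q : ℝ := ((Fintype.card F ^ 2 - 1 : ℕ) : ℝ)
  have hexponent : 2 / 3 * η ≤ (1 - 1 / Q) * (r / n) := by
    have hη' : η ≤ r / n := (le_div_iff₀ (mod_cast hn)).2 hη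
    have hQ' : 1 / Q ≤ 1 / 3 := one_div_le_one_div_of_le (by norm_num) hQ
    calc 2 / 3 * η ≤ 2 / 3 * (r / n) := by gcongr
      _ ≤ (1 - 1 / Q) * (r / n) := by gcongr; linarith
  have hbase : 1 - (1 - 1 / Q) * (r / n) ≤ Real.exp (-(2 / 3 * η)) :=
    (Real.one_sub_le_exp_neg _).trans (Real.exp_le_exp.2 (neg_le_neg hexponent))
  have hpow : (1 - (1 - 1 / Q) * (r / n)) ^ sympWt w ≤ Real.exp (-(2 / 3 * η * sympWt w)) := by
    calc (1 - (1 - 1 / Q) * (r / n)) ^ sympWt w ≤ Real.exp (-(2 / 3 * η)) ^ sympWt w :=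
          pow_le_pow_left₀
            (one_sub_mul_div_nonneg (by linarith) r.cast_nonneg (mod_cast hrn)) hbase _
      _ = Real.exp (-(2 / 3 * η * sympWt w)) := by
          rw [← Real.exp_nat_mul]
          ring_nf
  exact hbound.trans (by gcongr)

theorem floor_mul_mul_sq_le {q : ℕ} (hq : 0 < q) {δ : ℝ} (hδ0 : 0 ≤ δ)
    (hδ : δ ≤ 1 - 1 / (q : ℝ) ^ 2) (n : ℕ) : ⌊δ * n⌋₊ * q ^ 2 ≤ (q ^ 2 - 1) * n := by
  have hreal : (⌊δ * n⌋₊ : ℝ) * (q : ℝ) ^ 2 ≤ ((q : ℝ) ^ 2 - 1) * n := by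
    calc (⌊δ * n⌋₊ : ℝ) * (q : ℝ) ^ 2 ≤ (1 - 1 / (q : ℝ) ^ 2) * n * q ^ 2 := by
          gcongr
          exact (Nat.floor_le (by positivity)).trans (by gcongr)
      _ = ((q : ℝ) ^ 2 - 1) * n := by field_simp
  have hcast : ((q ^ 2 - 1 : ℕ) : ℝ) = (q : ℝ) ^ 2 - 1 := by
    rw [Nat.cast_sub (Nat.one_le_pow _ _ hq), Nat.cast_pow, Nat.cast_one]
  rw [← hcast] at hreal
  exact mod_cast hreal

theorem exists_eventually_norm_ballFourier_le {ψ : AddChar F ℂ} (hψ : ψ.IsPrimitive) {δ ε : ℝ}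
    (hδ0 : 0 < δ) (hδ : δ < 1 - 1 / (Fintype.card F : ℝ) ^ 2) (hε : 0 < ε) :
    ∃ κ : ℝ, 0 < κ ∧ ∀ᶠ n : ℕ in atTop, ∀ w : Fin n → F × F, ⌊ε * n⌋₊ < sympWt w →
      ‖ballFourier ψ ⌊δ * n⌋₊ w‖ ≤
        (Fintype.card F : ℝ) ^ (-(κ * n)) * volS (Fintype.card F) n ⌊δ * n⌋₊ := by
  have hq : (1 : ℝ) < Fintype.card F := mod_cast Fintype.one_lt_card
  have hlog : 0 < Real.log (Fintype.card F) := Real.log_pos hq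
  refine ⟨δ * ε / 6 / Real.log (Fintype.card F), by positivity, ?_⟩
  filter_upwards [eventually_add_one_le_exp (by positivity : 0 < δ * ε / 6),
    tendsto_natCast_atTop_atTop.eventually_ge_atTop (2 / δ), eventually_gt_atTop 0]
    with n hpoly hn hn0 w hw
  have hradius : δ / 2 * n ≤ ⌊δ * n⌋₊ := by
    have hfloor := Nat.lt_floor_add_one (δ * n)
    have hδn : 2 ≤ n * δ := (div_le_iff₀ hδ0).1 hn
    linarith
  have hweight : ε * n ≤ sympWt w := (Nat.lt_of_floor_lt hw).le
  refine (norm_ballFourier_le_exp hψ hn0 (floor_mul_mul_sq_le Fintype.card_pos hδ0.le hδ.le n)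
    hradius w).trans ?_
  gcongr
  calc (n + 1) * Real.exp (-(2 / 3 * (δ / 2) * sympWt w))
      ≤ Real.exp (δ * ε / 6 * n) * Real.exp (-(2 / 3 * (δ / 2) * (ε * n))) := by gcongr
    _ = (Fintype.card F : ℝ) ^ (-(δ * ε / 6 / Real.log (Fintype.card F) * n)) := by
        rw [← Real.exp_add, Real.rpow_def_of_pos (by linarith)]
        congr 1
        field_simp
        ring

theorem rpow_mul_sub_two_le_volS {q : ℕ} (hq : 1 ≤ q) {δ : ℝ} (hδ1 : δ ≤ 1) (n : ℕ) :
    (q : ℝ) ^ (δ * n - 2) ≤ volS q n (⌊δ * n⌋₊ / 2) := by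
  have hfloor_le : ⌊δ * n⌋₊ ≤ n :=
    Nat.floor_le_of_le (mul_le_of_le_one_left n.cast_nonneg hδ1)
  have hexponent : δ * n - 2 ≤ (2 * (⌊δ * n⌋₊ / 2) : ℕ) := by
    have hfloor := Nat.lt_floor_add_one (δ * n)
    have hparity : (⌊δ * n⌋₊ : ℝ) ≤ (2 * (⌊δ * n⌋₊ / 2) : ℕ) + 1 :=
      mod_cast (by omega : ⌊δ * n⌋₊ ≤ 2 * (⌊δ * n⌋₊ / 2) + 1)
    linarith
  calc (q : ℝ) ^ (δ * n - 2) ≤ (q : ℝ) ^ ((2 * (⌊δ * n⌋₊ / 2) : ℕ) : ℝ) :=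
        Real.rpow_le_rpow_of_exponent_le (mod_cast hq) hexponent
    _ = (q ^ (2 * (⌊δ * n⌋₊ / 2)) : ℕ) := by rw [Real.rpow_natCast, Nat.cast_pow]
    _ ≤ volS q n (⌊δ * n⌋₊ / 2) :=
        Nat.cast_le.2 (pow_two_mul_le_volS hq ((Nat.div_le_self _ _).trans hfloor_le))

variable (F) in
theorem exists_eventually_card_lightTuples_le {δ : ℝ} (hδ0 : 0 < δ) (hδ1 : δ ≤ 1) :
    ∃ ε : ℝ, 0 < ε ∧ ∀ᶠ n : ℕ in atTop, ∀ ℓ : ℕ, (ℓ : ℝ) ≤ δ / 8 * n →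
      (#(lightTuples F n ⌊δ * n⌋₊ ℓ ⌊ε * n⌋₊) : ℝ) ≤
        (Fintype.card F : ℝ) ^ (-(δ / 8 * n)) * #(orthTuples F n ⌊δ * n⌋₊ ℓ) := by
  have hq : (1 : ℝ) < Fintype.card F := mod_cast Fintype.one_lt_card
  have hq0 : (0 : ℝ) < Fintype.card F := zero_lt_one.trans hq
  have hlog : 0 < Real.log (Fintype.card F) := Real.log_pos hq
  obtain ⟨ε, hε, hvol⟩ := exists_volS_floor_le_exp (Fintype.card F)
    (by positivity : 0 < Real.log (Fintype.card F) * (δ / 8))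
  refine ⟨ε, hε, ?_⟩
  filter_upwards [tendsto_natCast_atTop_atTop.eventually_ge_atTop (4 / δ)] with n hn ℓ hℓ
  have hδn : 4 ≤ n * δ := (div_le_iff₀ hδ0).1 hn
  have hvol' : (volS (Fintype.card F) n ⌊ε * n⌋₊ : ℝ) ≤
      (Fintype.card F : ℝ) ^ (δ / 8 * n) := by
    rw [Real.rpow_def_of_pos hq0, ← mul_assoc]
    exact hvol n
  have hscalars : (Fintype.card F : ℝ) ^ (2 * ℓ) ≤ (Fintype.card F : ℝ) ^ (δ / 4 * n) := by
    rw [← Real.rpow_natCast]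
    refine Real.rpow_le_rpow_of_exponent_le hq.le ?_
    push_cast
    linarith
  rw [Real.rpow_neg hq0.le, inv_mul_eq_div, le_div_iff₀ (by positivity)]
  refine card_lightTuples_mul_le (Real.one_le_rpow hq.le (by positivity)) ?_
  calc volS (Fintype.card F) n ⌊ε * n⌋₊ * (Fintype.card F : ℝ) ^ (2 * ℓ) *
        (Fintype.card F : ℝ) ^ (δ / 8 * n)
      ≤ (Fintype.card F : ℝ) ^ (δ / 8 * n) * (Fintype.card F : ℝ) ^ (δ / 4 * n) *
        (Fintype.card F : ℝ) ^ (δ / 8 * n) := by gcongr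
    _ = (Fintype.card F : ℝ) ^ (δ / 2 * n) := by
        rw [← Real.rpow_add hq0, ← Real.rpow_add hq0]
        ring_nf
    _ ≤ (Fintype.card F : ℝ) ^ (δ * n - 2) :=
        Real.rpow_le_rpow_of_exponent_le hq.le (by linarith)
    _ ≤ volS (Fintype.card F) n (⌊δ * n⌋₊ / 2) :=
        rpow_mul_sub_two_le_volS Fintype.card_pos hδ1 n

end Asymptotics

end SymplecticSpace

theorem abs_mul_sub_le_mul_iff {P e x V : ℝ} (hP : 0 < P) :
    |P * x - V| ≤ e * V ↔ (1 - e) / P * V ≤ x ∧ x ≤ (1 + e) / P * V := by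
  rw [abs_sub_le_iff, and_comm, div_mul_eq_mul_div, div_mul_eq_mul_div, div_le_iff₀' hP,
    le_div_iff₀' hP]
  constructor <;> rintro ⟨hlower, hupper⟩ <;> constructor <;> linarith

theorem symp_orth_tuple_intersection_bound_general (F : Type) [Field F] [Fintype F]
    [DecidableEq F] {δ : ℝ} (hδ0 : 0 < δ) (hδ : δ < 1 - 1 / (Fintype.card F : ℝ) ^ 2) :
    ∃ c : ℝ, 0 < c ∧ ∃ c' : ℝ, 0 < c' ∧ ∃ c'' : ℝ, 0 < c'' ∧ ∀ᶠ n : ℕ in atTop,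
      ∀ ℓ : ℕ, (ℓ : ℝ) ≤ c'' * n →
        (#{u ∈ orthTuples F n ⌊δ * n⌋₊ ℓ |
          ¬ ((1 - (Fintype.card F : ℝ) ^ (-(c * n))) / (Fintype.card F : ℝ) ^ ℓ *
                volS (Fintype.card F) n ⌊δ * n⌋₊ ≤ #(orthSection ⌊δ * n⌋₊ u) ∧
              #(orthSection ⌊δ * n⌋₊ u) ≤
                (1 + (Fintype.card F : ℝ) ^ (-(c * n))) / (Fintype.card F : ℝ) ^ ℓ *
                  volS (Fintype.card F) n ⌊δ * n⌋₊)} : ℝ) ≤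
          (Fintype.card F : ℝ) ^ (-(c' * n)) * #(orthTuples F n ⌊δ * n⌋₊ ℓ) := by
  have hq : (1 : ℝ) < Fintype.card F := mod_cast Fintype.one_lt_card
  have hq0 : (0 : ℝ) < Fintype.card F := zero_lt_one.trans hq
  have hδ1 : δ ≤ 1 := hδ.le.trans (sub_le_self 1 (by positivity))
  have hψ := AddChar.FiniteField.primitiveChar_to_Complex_isPrimitive F
  obtain ⟨ε, hε, hlight⟩ := exists_eventually_card_lightTuples_le F hδ0 hδ1
  obtain ⟨κ, hκ, hheavy⟩ := exists_eventually_norm_ballFourier_le hψ hδ0 hδ hε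
  refine ⟨κ / 2, by positivity, δ / 8, by positivity, min (κ / 2) (δ / 8), by positivity, ?_⟩
  filter_upwards [hlight, hheavy] with n hlight hheavy ℓ hℓ
  rw [min_mul_of_nonneg _ _ n.cast_nonneg, le_min_iff] at hℓ
  refine le_trans ?_ (hlight ℓ hℓ.2)
  refine Nat.cast_le.2 (Finset.card_le_card fun u hu => ?_)
  obtain ⟨hu, hfail⟩ := Finset.mem_filter.1 hu
  refine Finset.mem_filter.2 ⟨hu, ?_⟩
  contrapose! hfail
  rw [← abs_mul_sub_le_mul_iff (by positivity)]
  refine (abs_card_pow_mul_card_orthSection_sub_volS_le hψ (by positivity)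
    fun a ha => hheavy _ (hfail a ha)).trans ?_
  rw [← mul_assoc, ← Real.rpow_natCast, ← Real.rpow_add hq0]
  gcongr
  · exact hq.le
  · linarith [hℓ.1]

/-- For a prime power `q` (realized as the cardinality of a finite field `F`)
and a constant `δ ∈ (0, 1 - 1/q²)`, there exist `c, c', c'' > 0` such that for all sufficiently
large `n`, with `d - 1 = ⌊δn⌋` and `ℓ = ⌊c''√n⌋`: among all linearly independent, pairwise
symplectically orthogonal `ℓ`-tuples of vectors of `B_q^S(2n, d-1)`, the number of tuples for
which the two-sided estimate on `|B_q^S(2n,d-1) ∩ ⋂_i ⟨u_i⟩^{⊥_S}|` fails is at most a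
`q^{-c'n}` fraction of all such tuples. -/
theorem symp_orth_tuple_intersection_bound
    (q : ℕ) (F : Type) [Field F] [Fintype F] [DecidableEq F] (hF : Fintype.card F = q)
    (δ : ℝ) (hδ0 : 0 < δ) (hδ : δ < 1 - 1 / (q : ℝ) ^ 2) :
    ∃ c : ℝ, 0 < c ∧ ∃ c' : ℝ, 0 < c' ∧ ∃ c'' : ℝ, 0 < c'' ∧ ∃ N : ℕ, ∀ n : ℕ, N ≤ n →
      ∀ ℓ : ℕ, ℓ = ⌊c'' * Real.sqrt n⌋₊ →
      ∀ good : Finset (Fin ℓ → Fin n → F × F),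
        good = ((Finset.univ : Finset (Fin ℓ → Fin n → F × F)).filter fun u =>
          (∀ i, u i ∈ sympBall F n ⌊δ * (n : ℝ)⌋₊) ∧ LinearIndependent F u ∧
            ∀ i j, sympInner (u i) (u j) = 0) →
        ((good.filter fun u =>
            ¬ ((1 - (q : ℝ) ^ (-(c * (n : ℝ)))) / (q : ℝ) ^ ℓ *
                  (volS q n ⌊δ * (n : ℝ)⌋₊ : ℝ) ≤
                (((sympBall F n ⌊δ * (n : ℝ)⌋₊).filter fun v =>
                    ∀ i, sympInner (u i) v = 0).card : ℝ) ∧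
                (((sympBall F n ⌊δ * (n : ℝ)⌋₊).filter fun v =>
                    ∀ i, sympInner (u i) v = 0).card : ℝ) ≤
                (1 + (q : ℝ) ^ (-(c * (n : ℝ)))) / (q : ℝ) ^ ℓ *
                  (volS q n ⌊δ * (n : ℝ)⌋₊ : ℝ))).card : ℝ) ≤
          (q : ℝ) ^ (-(c' * (n : ℝ))) * (good.card : ℝ) := by
  subst hF
  obtain ⟨c, hc, c', hc', c'', hc'', hlarge⟩ :=
    symp_orth_tuple_intersection_bound_general F hδ0 hδ
  obtain ⟨N, hN⟩ := eventually_atTop.1 hlarge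
  refine ⟨c, hc, c', hc', c'', hc'', N, ?_⟩
  rintro n hn ℓ rfl good rfl
  refine hN n hn _ ((Nat.floor_le (by positivity)).trans ?_)
  gcongr
  exact Real.sqrt_le_iff.2 ⟨n.cast_nonneg, mod_cast Nat.le_self_pow two_ne_zero n⟩
end

section
/- Let q be a prime power and let δ ∈ (0, 1 − 1/q²) be a constant. Then there exist constants c'' > 0 and h'_δ ∈ (0,1), depending only on q and δ, such that for all sufficiently large n the following holds: for every integer ℓ with 2 ≤ ℓ ≤ c''√n, if (v_1, …, v_ℓ) is drawn uniformly at random from the (nonempty) set of ℓ-tuples of vectors in B_q^S(2n, ⌊δn⌋) that are linearly independent over 𝔽_q and pairwise symplectically orthogonal (⟨v_i, v_j⟩_S = 0 for all i, j), then the probability that v_1 + v_2 + ⋯ + v_ℓ ∈ B_q^S(2n, ⌊δn⌋) is at most 2^{−h'_δ n}. -/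
open Finset
open scoped Classical

/-!
Put `A = F × F`, `Q + 1 = #A = q ^ 2`, and let `B` be the Hamming ball of radius `r = dn` in
`A ^ n`.

Make the letters of a random word independent and nonzero with probability `d`. Since `r` is the
mode of the resulting binomial law, every point of `B` has probability at least `1 / ((n + 1) #B)`.
For two such words `x`, `y` and a fixed word `w`, a letter of `x + y + w` vanishes with probability
at most the collision probability `(1 - d) ^ 2 + d ^ 2 / Q`, which is less than `1 - d` exactly when
`d < Q / (Q + 1) = 1 - 1 / q ^ 2`. By Chernoff's bound only an exponentially small proportion
of the pairs in `B × B` satisfies `x + y + w ∈ B`; fixing all but two entries of an `ℓ`-tuple gives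
the same proportion for `ℓ`-tuples.

Conversely isotropic tuples are not rare: extend arbitrary vectors of a ball in dimension `n - ℓ` by
`ℓ` letters chosen to make them independent and to cancel their Gram matrix. This produces at least
`exp (-O(ℓ ^ 2)) #B ^ ℓ` isotropic tuples in `B`, and `ℓ ≤ c'' √n` makes the loss harmless.
-/

lemma one_add_pow_le_choose_mul_pow {R : Type*} [CommRing R] [LinearOrder R]
    [IsStrictOrderedRing R] {n r : ℕ} {θ : R} (hθ : 0 ≤ θ) (hr : θ * (n - r) = r) :
    (1 + θ) ^ n ≤ (n + 1) * (n.choose r * θ ^ r) := by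
  set f : ℕ → R := fun k ↦ n.choose k * θ ^ k
  have hf (k : ℕ) : 0 ≤ f k := by positivity
  have hrec (k : ℕ) (hk : k ≤ n) : f (k + 1) * (k + 1) = f k * (θ * (n - k)) := by
    have h := congrArg (Nat.cast : ℕ → R) (Nat.choose_succ_right_eq n k)
    push_cast [Nat.cast_sub hk] at h
    simp only [f, pow_succ]
    linear_combination θ ^ k * θ * h
  have hrn : r ≤ n := by
    by_contra! h
    have h' : (n : R) < r := by exact_mod_cast h
    nlinarith [(n.cast_nonneg : (0 : R) ≤ n)]
  have hmono : MonotoneOn f (Set.Iic r) := by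
    refine monotoneOn_of_le_add_one Set.ordConnected_Iic fun k _ _ hk ↦ ?_
    have hkr : (k : R) + 1 ≤ r := by exact_mod_cast hk
    refine le_of_mul_le_mul_right ?_ (by positivity : (0 : R) < k + 1)
    rw [hrec k ((Nat.le_succ k).trans (hk.trans hrn))]
    exact mul_le_mul_of_nonneg_left (by nlinarith) (hf k)
  have hanti : AntitoneOn f (Set.Icc r n) := by
    refine antitoneOn_of_add_one_le Set.ordConnected_Icc fun k _ hk _ ↦ ?_
    have hkr : (r : R) ≤ k := by exact_mod_cast hk.1
    refine le_of_mul_le_mul_right ?_ (by positivity : (0 : R) < k + 1)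
    rw [hrec k hk.2]
    exact mul_le_mul_of_nonneg_left (by nlinarith) (hf k)
  have hmode : ∀ k ∈ range (n + 1), f k ≤ f r := fun k hk ↦ by
    rcases le_total k r with h | h
    · exact hmono h Set.self_mem_Iic h
    · exact hanti ⟨le_rfl, hrn⟩ ⟨h, Nat.le_of_lt_succ (mem_range.1 hk)⟩ h
  calc (1 + θ) ^ n = ∑ k ∈ range (n + 1), f k := by simp [add_comm 1 θ, add_pow, f, mul_comm]
    _ ≤ #(range (n + 1)) • f r := sum_le_card_nsmul _ _ _ hmode
    _ = (n + 1) * f r := by simp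

lemma hammingNorm_append {A : Type*} [DecidableEq A] [Zero A] {m l : ℕ} (x : Fin m → A)
    (y : Fin l → A) :
    hammingNorm (Fin.append x y) = hammingNorm x + hammingNorm y := by
  simp [hammingNorm, card_filter, Fin.sum_univ_add]

section HammingBall

variable {ι A : Type*} [Fintype ι] [DecidableEq ι] [Fintype A] [DecidableEq A] [Zero A]

/-- The Hamming ball of radius `r` around `0` in `ι → A`, as a finset. With `A = F × F` and
`ι = Fin n` it is the symplectic ball `sympBall F n r`. -/
noncomputable def hammingBall (ι A : Type*) [Fintype ι] [DecidableEq ι] [Fintype A] [DecidableEq A]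
    [Zero A] (r : ℕ) : Finset (ι → A) :=
  {x | hammingNorm x ≤ r}

@[simp]
lemma mem_hammingBall {r : ℕ} {x : ι → A} : x ∈ hammingBall ι A r ↔ hammingNorm x ≤ r := by
  simp [hammingBall]

lemma card_hammingBall_pos (r : ℕ) : 0 < #(hammingBall ι A r) :=
  card_pos.2 ⟨0, by simp⟩

lemma card_filter_hammingNorm_eq (k : ℕ) :
    #{x : ι → A | hammingNorm x = k} =
      (Fintype.card ι).choose k * (Fintype.card A - 1) ^ k := by
  have hfiber (S : Finset ι) (hS : #S = k) :
      #{x ∈ {x : ι → A | hammingNorm x = k} | ({i | x i ≠ 0} : Finset ι) = S} =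
        (Fintype.card A - 1) ^ k := by
    have : ({x ∈ {x : ι → A | hammingNorm x = k} | ({i | x i ≠ 0} : Finset ι) = S} :
        Finset (ι → A)) = Fintype.piFinset fun i ↦ if i ∈ S then univ.erase 0 else {0} := by
      ext x
      simp only [mem_filter, mem_univ, true_and, Fintype.mem_piFinset, Finset.ext_iff]
      refine ⟨fun h i ↦ ?_, fun h ↦ ?_⟩
      · by_cases hi : i ∈ S <;> simpa [hi] using h.2 i
      · have hx (i : ι) : x i ≠ 0 ↔ i ∈ S := by
          by_cases hi : i ∈ S <;> simpa [hi] using h i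
        simp [hammingNorm, hx, hS]
    simp [this, apply_ite card, hS]
  rw [card_eq_sum_card_fiberwise (f := fun x ↦ ({i | x i ≠ 0} : Finset ι))
    (t := powersetCard k univ) fun x hx ↦ by simpa [hammingNorm] using hx]
  simp [sum_congr rfl fun S hS ↦ hfiber S (mem_powersetCard.1 hS).2]

lemma choose_mul_pow_le_card_hammingBall (r : ℕ) :
    (Fintype.card ι).choose r * (Fintype.card A - 1) ^ r ≤ #(hammingBall ι A r) := by
  rw [← card_filter_hammingNorm_eq]
  exact card_le_card fun x hx ↦ by simp_all

lemma succ_mul_card_hammingBall_succ_le (s : ℕ) :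
    (s + 1) * #(hammingBall ι A (s + 1)) ≤
      (s + 1 + Fintype.card ι * Fintype.card A) * #(hammingBall ι A s) := by
  have hunion : hammingBall ι A (s + 1) =
      hammingBall ι A s ∪ ({x | hammingNorm x = s + 1} : Finset (ι → A)) := by
    ext x
    simp [Nat.le_succ_iff]
  have hsphere : (s + 1) * #{x : ι → A | hammingNorm x = s + 1} ≤
      Fintype.card ι * Fintype.card A * #(hammingBall ι A s) :=
    calc (s + 1) * #{x : ι → A | hammingNorm x = s + 1}
        = (Fintype.card ι).choose (s + 1) * (s + 1) * (Fintype.card A - 1) ^ (s + 1) := by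
          rw [card_filter_hammingNorm_eq]; ring
      _ = (Fintype.card ι - s) * (Fintype.card A - 1) *
            ((Fintype.card ι).choose s * (Fintype.card A - 1) ^ s) := by
          rw [Nat.choose_succ_right_eq]; ring
      _ ≤ Fintype.card ι * Fintype.card A * #(hammingBall ι A s) := by
          gcongr
          · exact Nat.sub_le _ _
          · exact Nat.sub_le _ _
          · exact choose_mul_pow_le_card_hammingBall s
  calc (s + 1) * #(hammingBall ι A (s + 1))
      ≤ (s + 1) * (#(hammingBall ι A s) + #{x : ι → A | hammingNorm x = s + 1}) := by
        rw [hunion]; gcongr; exact card_union_le _ _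
    _ ≤ (s + 1 + Fintype.card ι * Fintype.card A) * #(hammingBall ι A s) := by linarith

lemma card_hammingBall_add_le {κ : ℝ} (s l : ℕ)
    (hκ : (Fintype.card ι : ℝ) * Fintype.card A ≤ κ * (s + 1)) :
    (#(hammingBall ι A (s + l)) : ℝ) ≤ (1 + κ) ^ l * #(hammingBall ι A s) := by
  have hκ0 : 0 ≤ κ := nonneg_of_mul_nonneg_left (le_trans (by positivity) hκ) (by positivity)
  induction l with
  | zero => simp
  | succ l ih =>
    have hpos : (0 : ℝ) < (s + l : ℕ) + 1 := by positivity
    have hκl : (Fintype.card ι : ℝ) * Fintype.card A ≤ κ * ((s + l : ℕ) + 1) :=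
      hκ.trans (by gcongr; simp)
    have hstep : (#(hammingBall ι A (s + l + 1)) : ℝ) ≤ (1 + κ) * #(hammingBall ι A (s + l)) := by
      refine le_of_mul_le_mul_left ?_ hpos
      calc (((s + l : ℕ) : ℝ) + 1) * #(hammingBall ι A (s + l + 1))
          ≤ ((s + l : ℕ) + 1 + (Fintype.card ι : ℝ) * Fintype.card A) *
              #(hammingBall ι A (s + l)) := by
            exact_mod_cast succ_mul_card_hammingBall_succ_le (s + l)
        _ ≤ ((s + l : ℕ) + 1 + κ * ((s + l : ℕ) + 1)) * #(hammingBall ι A (s + l)) := by gcongr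
        _ = ((s + l : ℕ) + 1) * ((1 + κ) * #(hammingBall ι A (s + l))) := by ring
    calc (#(hammingBall ι A (s + l + 1)) : ℝ) ≤ (1 + κ) * #(hammingBall ι A (s + l)) := hstep
      _ ≤ (1 + κ) * ((1 + κ) ^ l * #(hammingBall ι A s)) := by gcongr
      _ = (1 + κ) ^ (l + 1) * #(hammingBall ι A s) := by ring

lemma card_hammingBall_fin_add_le (m l r : ℕ) :
    #(hammingBall (Fin (m + l)) A r) ≤ #(hammingBall (Fin m) A r) * Fintype.card A ^ l := by
  calc #(hammingBall (Fin (m + l)) A r)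
      ≤ #(hammingBall (Fin m) A r ×ˢ (univ : Finset (Fin l → A))) := by
        refine card_le_card_of_injOn (Fin.appendEquiv m l).symm (fun x hx ↦ ?_)
          (Equiv.injective _).injOn
        obtain ⟨⟨y, z⟩, rfl⟩ := (Fin.appendEquiv m l).surjective x
        have : hammingNorm y + hammingNorm z ≤ r := by
          simpa [Fin.appendEquiv, hammingNorm_append] using hx
        simpa using le_of_add_le_left this
    _ = #(hammingBall (Fin m) A r) * Fintype.card A ^ l := by simp

lemma card_hammingBall_fin_add_add_le {m s : ℕ} {κ : ℝ} (l : ℕ)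
    (hκ : (m : ℝ) * Fintype.card A ≤ κ * (s + 1)) :
    (#(hammingBall (Fin (m + l)) A (s + l)) : ℝ) ≤
      (Fintype.card A * (1 + κ)) ^ l * #(hammingBall (Fin m) A s) :=
  calc (#(hammingBall (Fin (m + l)) A (s + l)) : ℝ)
      ≤ #(hammingBall (Fin m) A (s + l)) * Fintype.card A ^ l := by
        exact_mod_cast card_hammingBall_fin_add_le m l (s + l)
    _ ≤ (1 + κ) ^ l * #(hammingBall (Fin m) A s) * Fintype.card A ^ l := by
        gcongr; exact card_hammingBall_add_le s l (by simpa using hκ)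
    _ = (Fintype.card A * (1 + κ)) ^ l * #(hammingBall (Fin m) A s) := by rw [mul_pow]; ring

lemma one_add_pow_le_card_hammingBall_mul_pow {R : Type*} [CommRing R] [LinearOrder R]
    [IsStrictOrderedRing R] {u : R} {r : ℕ} (hu : 0 ≤ u)
    (hr : (Fintype.card A - 1) * u * (Fintype.card ι - r) = r) :
    (1 + (Fintype.card A - 1) * u) ^ Fintype.card ι ≤
      (Fintype.card ι + 1) * (#(hammingBall ι A r) * u ^ r) := by
  have hA : 1 ≤ Fintype.card A := Fintype.card_pos_iff.2 ⟨0⟩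
  have hcast : ((Fintype.card A - 1 : ℕ) : R) = Fintype.card A - 1 := by simp [Nat.cast_sub hA]
  rw [← hcast] at hr ⊢
  refine (one_add_pow_le_choose_mul_pow (by positivity) hr).trans ?_
  rw [mul_pow, ← mul_assoc (Nat.cast _)]
  gcongr
  exact_mod_cast choose_mul_pow_le_card_hammingBall r

end HammingBall

lemma sum_ite_eq_zero_one (A : Type*) [Fintype A] [DecidableEq A] [Zero A] {R : Type*} [Ring R]
    (u : R) : ∑ a : A, (if a = 0 then 1 else u) = 1 + (Fintype.card A - 1) * u := by
  rw [← add_sum_erase univ _ (mem_univ 0), if_pos rfl,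
    sum_congr rfl fun a ha ↦ if_neg (ne_of_mem_erase ha), sum_const, card_erase_of_mem (mem_univ _),
    nsmul_eq_mul, card_univ, Nat.cast_pred (Fintype.card_pos_iff.2 ⟨0⟩)]

lemma pow_hammingNorm {ι A R : Type*} [Fintype ι] [DecidableEq A] [Zero A] [CommMonoid R] (u : R)
    (x : ι → A) : u ^ hammingNorm x = ∏ i, if x i = 0 then 1 else u := by
  simp [prod_ite, hammingNorm]

lemma sum_mul_comp_perm_le_sum_sq {α R : Type*} [Fintype α] [CommRing R] [LinearOrder R]
    [IsStrictOrderedRing R] (f : α → R) (σ : Equiv.Perm α) :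
    ∑ a, f a * f (σ a) ≤ ∑ a, f a ^ 2 := by
  have h : 2 * ∑ a, f a * f (σ a) ≤ 2 * ∑ a, f a ^ 2 :=
    calc 2 * ∑ a, f a * f (σ a) = ∑ a, 2 * f a * f (σ a) := by simp only [mul_sum, mul_assoc]
      _ ≤ ∑ a, (f a ^ 2 + f (σ a) ^ 2) := sum_le_sum fun a _ ↦ two_mul_le_add_sq _ _
      _ = 2 * ∑ a, f a ^ 2 := by
        rw [sum_add_distrib, Equiv.sum_comp σ fun a ↦ f a ^ 2, two_mul]
  exact le_of_mul_le_mul_left h two_pos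

section PairSums

variable {A R : Type*} [Fintype A] [DecidableEq A] [AddCommGroup A] [CommRing R] [LinearOrder R]
  [IsStrictOrderedRing R]

lemma sum_sum_mul_ite_add_eq_zero_le (f : A → R) {t : R} (ht : t ≤ 1) (c : A) :
    ∑ a, ∑ b, f a * f b * (if a + b + c = 0 then 1 else t) ≤
      t * (∑ a, f a) ^ 2 + (1 - t) * ∑ a, f a ^ 2 := by
  let σ : Equiv.Perm A := Equiv.subLeft (-c)
  have hσ (a b : A) : f a * f b * (if a + b + c = 0 then 1 else t) =
      t * (f a * f b) + if b = σ a then (1 - t) * (f a * f b) else 0 := by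
    have : a + b + c = 0 ↔ b = σ a := by
      rw [Equiv.subLeft_apply, eq_sub_iff_add_eq, eq_neg_iff_add_eq_zero, add_comm b a]
    simp only [this]
    split_ifs <;> ring
  calc ∑ a, ∑ b, f a * f b * (if a + b + c = 0 then 1 else t)
      = t * (∑ a, f a) ^ 2 + (1 - t) * ∑ a, f a * f (σ a) := by
        simp_rw [hσ, sum_add_distrib, sum_ite_eq', mem_univ, if_true, ← mul_sum, sq, sum_mul_sum,
          mul_sum]
    _ ≤ t * (∑ a, f a) ^ 2 + (1 - t) * ∑ a, f a ^ 2 :=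
        add_le_add le_rfl <|
          mul_le_mul_of_nonneg_left (sum_mul_comp_perm_le_sum_sq f σ) (sub_nonneg.2 ht)

variable {ι : Type*} [Fintype ι] [DecidableEq ι]

lemma sum_sum_pow_hammingNorm_le {u t : R} (hu : 0 ≤ u) (ht0 : 0 ≤ t) (ht1 : t ≤ 1)
    (w : ι → A) :
    ∑ x : ι → A, ∑ y : ι → A,
        u ^ hammingNorm x * u ^ hammingNorm y * t ^ hammingNorm (x + y + w) ≤
      (t * (1 + (Fintype.card A - 1) * u) ^ 2 + (1 - t) * (1 + (Fintype.card A - 1) * u ^ 2)) ^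
        Fintype.card ι := by
  let f : A → R := fun a ↦ if a = 0 then 1 else u
  have hf (a : A) : 0 ≤ f a := by dsimp only [f]; split_ifs <;> simp [hu]
  have hf2 (a : A) : f a ^ 2 = if a = 0 then 1 else u ^ 2 := by simp [f, ite_pow]
  calc ∑ x : ι → A, ∑ y : ι → A,
        u ^ hammingNorm x * u ^ hammingNorm y * t ^ hammingNorm (x + y + w)
      = ∏ i, ∑ a, ∑ b, f a * f b * (if a + b + w i = 0 then 1 else t) := by
        simp_rw [pow_hammingNorm, ← prod_mul_distrib, Fintype.prod_sum]
        rfl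
    _ ≤ ∏ _i : ι, (t * (∑ a, f a) ^ 2 + (1 - t) * ∑ a, f a ^ 2) := by
        refine prod_le_prod (fun i _ ↦ ?_) fun i _ ↦ sum_sum_mul_ite_add_eq_zero_le f ht1 (w i)
        refine sum_nonneg fun a _ ↦ sum_nonneg fun b _ ↦ mul_nonneg (mul_nonneg (hf a) (hf b)) ?_
        split_ifs <;> simp [ht0]
    _ = _ := by simp [hf2, f, sum_ite_eq_zero_one]

lemma card_pairs_hammingBall_mul_le {u t : R} (hu0 : 0 ≤ u) (hu1 : u ≤ 1) (ht0 : 0 ≤ t)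
    (ht1 : t ≤ 1) (r : ℕ) (w : ι → A) :
    (#{p ∈ hammingBall ι A r ×ˢ hammingBall ι A r | p.1 + p.2 + w ∈ hammingBall ι A r} : R) *
        (u ^ r * u ^ r * t ^ r) ≤
      (t * (1 + (Fintype.card A - 1) * u) ^ 2 + (1 - t) * (1 + (Fintype.card A - 1) * u ^ 2)) ^
        Fintype.card ι := by
  let g : (ι → A) × (ι → A) → R := fun p ↦
    u ^ hammingNorm p.1 * u ^ hammingNorm p.2 * t ^ hammingNorm (p.1 + p.2 + w)
  calc _ ≤ ∑ p ∈ hammingBall ι A r ×ˢ hammingBall ι A r with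
          p.1 + p.2 + w ∈ hammingBall ι A r, g p := by
        rw [← nsmul_eq_mul]
        refine card_nsmul_le_sum _ _ _ fun p hp ↦ ?_
        simp only [mem_filter, mem_product, mem_hammingBall] at hp
        obtain ⟨⟨hx, hy⟩, hxy⟩ := hp
        have hx' := pow_le_pow_of_le_one hu0 hu1 hx
        have hy' := pow_le_pow_of_le_one hu0 hu1 hy
        have hxy' := pow_le_pow_of_le_one ht0 ht1 hxy
        dsimp only [g]
        gcongr
    _ ≤ ∑ p, g p := sum_le_univ_sum_of_nonneg fun p ↦ by positivity
    _ = ∑ x, ∑ y, g (x, y) := Fintype.sum_prod_type g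
    _ ≤ _ := sum_sum_pow_hammingNorm_le hu0 ht0 ht1 w

end PairSums

lemma card_filter_sum_mem_le {G R : Type*} [AddCommMonoid G] [DecidableEq G] [CommSemiring R]
    [PartialOrder R] [IsOrderedRing R] (B T : Finset G) {M : R}
    (hM : ∀ w, (#{p ∈ B ×ˢ B | p.1 + p.2 + w ∈ T} : R) ≤ M) (k : ℕ) :
    (#{v ∈ Fintype.piFinset fun _ : Fin (k + 2) ↦ B | ∑ i, v i ∈ T} : R) ≤ M * #B ^ k := by
  let tail : (Fin (k + 2) → G) → Fin k → G := fun v i ↦ v i.succ.succ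
  let S := {v ∈ Fintype.piFinset fun _ : Fin (k + 2) ↦ B | ∑ i, v i ∈ T}
  have hmaps : ∀ v ∈ S, tail v ∈ Fintype.piFinset fun _ : Fin k ↦ B := fun v hv ↦ by
    simp only [S, mem_filter, Fintype.mem_piFinset] at hv
    simpa [tail] using fun i : Fin k ↦ hv.1 i.succ.succ
  have hfiber (z : Fin k → G) : (#{v ∈ S | tail v = z} : R) ≤ M := by
    refine le_trans ?_ (hM (∑ i, z i))
    refine Nat.mono_cast <| card_le_card_of_injOn (fun v ↦ (v 0, v 1)) (fun v hv ↦ ?_) ?_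
    · simp only [S, coe_filter, mem_filter, Fintype.mem_piFinset, Set.mem_ofPred_eq] at hv
      obtain ⟨⟨hB, hT⟩, rfl⟩ := hv
      simp_all [tail, Fin.sum_univ_succ, add_assoc]
    · intro v hv v' hv' h
      simp only [coe_filter, Set.mem_ofPred_eq] at hv hv'
      simp only [Prod.mk.injEq] at h
      funext i
      refine Fin.cases h.1 (Fin.cases h.2 fun j ↦ ?_) i
      exact congrFun (hv.2.trans hv'.2.symm) j
  calc (#S : R) = ∑ z ∈ Fintype.piFinset fun _ : Fin k ↦ B, (#{v ∈ S | tail v = z} : R) := by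
        rw [card_eq_sum_card_fiberwise hmaps, Nat.cast_sum]
    _ ≤ #(Fintype.piFinset fun _ : Fin k ↦ B) • M := sum_le_card_nsmul _ _ _ fun z _ ↦ hfiber z
    _ = M * #B ^ k := by simp [mul_comm]

-- Chernoff bound for a letter that is nonzero with probability `d + γ`, with tilt `exp (-γ / 2)`.
lemma one_sub_mul_le_rpow_mul_exp {d γ : ℝ} (hd : 0 ≤ d) (hγ : 0 ≤ γ) (hdγ : d + γ ≤ 1) :
    1 - (1 - Real.exp (-(γ / 2))) * (d + γ) ≤
      Real.exp (-(γ / 2)) ^ d * Real.exp (-(γ ^ 2 / 4)) := by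
  have hquad : Real.exp (-(γ / 2)) ≤ 1 - γ / 2 + (γ / 2) ^ 2 := by
    have hs : |(-(γ / 2))| ≤ 1 := by rw [abs_neg, abs_of_nonneg] <;> linarith
    linarith [(abs_le.1 (Real.abs_exp_sub_one_sub_id_le hs)).2]
  have hexp : γ / 2 * d + γ ^ 2 / 4 ≤ (1 - Real.exp (-(γ / 2))) * (d + γ) :=
    calc γ / 2 * d + γ ^ 2 / 4 ≤ (γ / 2 - (γ / 2) ^ 2) * (d + γ) := by nlinarith [sq_nonneg γ]
      _ ≤ (1 - Real.exp (-(γ / 2))) * (d + γ) := by gcongr ?_ * _; linarith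
  calc 1 - (1 - Real.exp (-(γ / 2))) * (d + γ)
      ≤ Real.exp (-((1 - Real.exp (-(γ / 2))) * (d + γ))) := Real.one_sub_le_exp_neg _
    _ ≤ Real.exp (-(γ / 2) * d + -(γ ^ 2 / 4)) := by gcongr; linarith
    _ = Real.exp (-(γ / 2)) ^ d * Real.exp (-(γ ^ 2 / 4)) := by rw [Real.exp_add, Real.exp_mul]

-- The weight `u` makes `u ^ hammingNorm` proportional to the law of independent letters that are
-- nonzero with probability `d`; two of them agree with probability `(1 - d) ^ 2 + d ^ 2 / Q`.
lemma pair_factor_le {Q d γ : ℝ} (hd : 0 < d) (hγ : 0 ≤ γ) (hQ : 0 < Q) (hd1 : d < 1)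
    (hdγ : γ ≤ d * (1 - d - d / Q)) :
    let u := d / Q / (1 - d)
    let t := Real.exp (-(γ / 2))
    t * (1 + Q * u) ^ 2 + (1 - t) * (1 + Q * u ^ 2) ≤
      (1 + Q * u) ^ 2 * (t ^ d * Real.exp (-(γ ^ 2 / 4))) := by
  intro u t
  have hd1' : 0 < 1 - d := sub_pos.2 hd1
  have ht1 : t ≤ 1 := Real.exp_le_one_iff.2 (by linarith)
  have hdγ1 : d + γ ≤ 1 := by
    have : d * (d / Q) ≥ 0 := by positivity
    nlinarith
  calc t * (1 + Q * u) ^ 2 + (1 - t) * (1 + Q * u ^ 2)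
      = (1 + Q * u) ^ 2 * (1 - (1 - t) * (d + d * (1 - d - d / Q))) := by
        simp only [u]; field_simp; ring
    _ ≤ (1 + Q * u) ^ 2 * (1 - (1 - t) * (d + γ)) := by gcongr
    _ ≤ (1 + Q * u) ^ 2 * (t ^ d * Real.exp (-(γ ^ 2 / 4))) := by
        gcongr; exact one_sub_mul_le_rpow_mul_exp hd.le hγ hdγ1

section PairBound

variable {ι A : Type*} [Fintype ι] [DecidableEq ι] [Fintype A] [DecidableEq A] [AddCommGroup A]
  [Nontrivial A]

lemma card_pairs_hammingBall_le {r : ℕ} {d γ : ℝ} (hd : 0 < d) (hγ : 0 < γ)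
    (hr : (r : ℝ) = d * Fintype.card ι) (hdγ : γ ≤ d * (1 - d - d / (Fintype.card A - 1)))
    (w : ι → A) :
    (#{p ∈ hammingBall ι A r ×ˢ hammingBall ι A r | p.1 + p.2 + w ∈ hammingBall ι A r} : ℝ) ≤
      ((Fintype.card ι + 1) * #(hammingBall ι A r)) ^ 2 *
        Real.exp (-(γ ^ 2 / 4)) ^ Fintype.card ι := by
  set n := Fintype.card ι
  set b := (#(hammingBall ι A r) : ℝ)
  set Q : ℝ := Fintype.card A - 1
  have hQ : 0 < Q := sub_pos.2 (by exact_mod_cast Fintype.one_lt_card (α := A))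
  have hgap : 0 < 1 - d - d / Q := pos_of_mul_pos_right (hγ.trans_le hdγ) hd.le
  have hd1 : 0 < 1 - d := by have := div_pos hd hQ; linarith
  obtain ⟨u, hu⟩ : ∃ u, u = d / Q / (1 - d) := ⟨_, rfl⟩
  obtain ⟨t, ht⟩ : ∃ t, t = Real.exp (-(γ / 2)) := ⟨_, rfl⟩
  have hu0 : 0 < u := hu ▸ by positivity
  have hu1 : u ≤ 1 := by rw [hu, div_le_one hd1]; linarith
  have ht0 : 0 < t := ht ▸ Real.exp_pos _
  have ht1 : t ≤ 1 := ht ▸ Real.exp_le_one_iff.2 (by linarith)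
  have htr : (t ^ d) ^ n = t ^ r := by
    rw [← Real.rpow_natCast, ← Real.rpow_mul ht0.le, ← hr, Real.rpow_natCast]
  have hmode : Q * u * (n - d * n) = d * n := by rw [hu]; field_simp
  have hball : (1 + Q * u) ^ n ≤ (n + 1) * (b * u ^ r) :=
    one_add_pow_le_card_hammingBall_mul_pow hu0.le (hr ▸ hmode)
  refine le_of_mul_le_mul_right ?_ (by positivity : 0 < u ^ r * u ^ r * t ^ r)
  calc _ ≤ (t * (1 + Q * u) ^ 2 + (1 - t) * (1 + Q * u ^ 2)) ^ n :=
        card_pairs_hammingBall_mul_le hu0.le hu1 ht0.le ht1 r w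
    _ ≤ ((1 + Q * u) ^ 2 * (t ^ d * Real.exp (-(γ ^ 2 / 4)))) ^ n := by
        have : 0 ≤ 1 - t := sub_nonneg.2 ht1
        gcongr
        subst hu ht
        exact pair_factor_le hd hγ.le hQ (sub_pos.1 hd1) hdγ
    _ = ((1 + Q * u) ^ n) ^ 2 * t ^ r * Real.exp (-(γ ^ 2 / 4)) ^ n := by
        rw [mul_pow, mul_pow, htr, pow_right_comm, mul_assoc]
    _ ≤ ((n + 1) * (b * u ^ r)) ^ 2 * t ^ r * Real.exp (-(γ ^ 2 / 4)) ^ n := by gcongr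
    _ = _ := by ring

end PairBound

open Filter Topology

lemma eventually_add_one_sq_le_exp_mul {c : ℝ} (hc : 0 < c) :
    ∀ᶠ n : ℕ in atTop, ((n : ℝ) + 1) ^ 2 ≤ Real.exp (c * n) := by
  have hlim : Tendsto (fun n : ℕ ↦ (n : ℝ) + 1) atTop atTop :=
    tendsto_atTop_add_const_right _ _ tendsto_natCast_atTop_atTop
  filter_upwards [hlim.eventually
    ((isLittleO_pow_exp_pos_mul_atTop 2 hc).bound (Real.exp_pos (-c)))] with n hn
  rw [Real.norm_of_nonneg (by positivity), Real.norm_of_nonneg (by positivity),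
    ← Real.exp_add] at hn
  exact hn.trans_eq (by ring_nf)

lemma exists_eventually_card_sum_mem_hammingBall_le (A : Type*) [Fintype A] [DecidableEq A]
    [AddCommGroup A] [Nontrivial A] {δ : ℝ} (hδ0 : 0 < δ) (hδ1 : δ < 1 - 1 / Fintype.card A) :
    ∃ a : ℝ, 0 < a ∧ ∀ᶠ n : ℕ in atTop, ∀ k : ℕ,
      (#{v ∈ Fintype.piFinset fun _ : Fin (k + 2) ↦ hammingBall (Fin n) A ⌊δ * n⌋₊ |
        ∑ i, v i ∈ hammingBall (Fin n) A ⌊δ * n⌋₊} : ℝ) ≤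
      Real.exp (-(a * n)) * #(hammingBall (Fin n) A ⌊δ * n⌋₊) ^ (k + 2) := by
  let g : ℝ → ℝ := fun x ↦ x * (1 - x - x / (Fintype.card A - 1))
  have hg : 0 < g δ := by
    have hA : (1 : ℝ) < Fintype.card A := by exact_mod_cast Fintype.one_lt_card
    have hQ : (0 : ℝ) < Fintype.card A - 1 := sub_pos.2 hA
    refine mul_pos hδ0 ?_
    rw [sub_pos, div_lt_iff₀ hQ]
    rw [lt_sub_comm, div_lt_iff₀ (by linarith)] at hδ1
    linarith
  obtain ⟨γ, hγ0, hγg⟩ := exists_between hg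
  have hlim : Tendsto (fun n : ℕ ↦ (⌊δ * n⌋₊ : ℝ) / n) atTop (𝓝 δ) :=
    (tendsto_nat_floor_mul_div_atTop hδ0.le).comp tendsto_natCast_atTop_atTop
  have hglim : Tendsto (fun n : ℕ ↦ g (⌊δ * n⌋₊ / n)) atTop (𝓝 (g δ)) :=
    (by fun_prop : Continuous g).continuousAt.tendsto.comp hlim
  have hc : 0 < γ ^ 2 / 8 := by positivity
  refine ⟨γ ^ 2 / 8, hc, ?_⟩
  filter_upwards [hlim.eventually_const_lt hδ0, hglim.eventually_const_lt hγg,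
    eventually_add_one_sq_le_exp_mul hc, eventually_ne_atTop 0] with n hd hγ hpoly hn k
  set r := ⌊δ * n⌋₊
  set b := (#(hammingBall (Fin n) A r) : ℝ)
  calc _ ≤ ((n + 1) * b) ^ 2 * Real.exp (-(γ ^ 2 / 4)) ^ n * b ^ k := by
        have hM (w : Fin n → A) : (#{p ∈ hammingBall (Fin n) A r ×ˢ hammingBall (Fin n) A r |
            p.1 + p.2 + w ∈ hammingBall (Fin n) A r} : ℝ) ≤
              ((n + 1) * b) ^ 2 * Real.exp (-(γ ^ 2 / 4)) ^ n := by
          have hr : (r : ℝ) = r / n * Fintype.card (Fin n) := by simp [hn]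
          simpa only [Fintype.card_fin] using card_pairs_hammingBall_le hd hγ0 hr hγ.le w
        exact card_filter_sum_mem_le _ _ hM k
    _ = ((n : ℝ) + 1) ^ 2 * Real.exp (-(γ ^ 2 / 4) * n) * b ^ (k + 2) := by
        rw [mul_comm (-(γ ^ 2 / 4)), Real.exp_nat_mul]; ring
    _ ≤ Real.exp (γ ^ 2 / 8 * n) * Real.exp (-(γ ^ 2 / 4) * n) * b ^ (k + 2) := by gcongr
    _ = Real.exp (-(γ ^ 2 / 8 * n)) * b ^ (k + 2) := by rw [← Real.exp_add]; ring_nf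

section Isotropic

variable {F : Type} [Field F]

lemma sympInner_comm_neg {m : ℕ} (x y : Fin m → F × F) : sympInner x y = -sympInner y x := by
  simp [sympInner, mul_comm]

lemma sympInner_self {m : ℕ} (x : Fin m → F × F) : sympInner x x = 0 := by
  simp [sympInner, mul_comm]

lemma sympInner_append {m l : ℕ} (x x' : Fin m → F × F) (y y' : Fin l → F × F) :
    sympInner (Fin.append x y) (Fin.append x' y') = sympInner x x' + sympInner y y' := by
  simp only [sympInner, Fin.sum_univ_add, Fin.append_left, Fin.append_right]

/-- For `u : Fin l → F^{2m}`, vectors `(e_j | c_j)` of `F^{2l}` whose Gram matrix for `sympInner` is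
the negative of that of `u`: the alternating Gram matrix is stored strictly below the diagonal
of the second halves. Appending them to `u` gives an independent, totally isotropic family. -/
noncomputable def gramCorrection {m l : ℕ} (u : Fin l → Fin m → F × F) (j k : Fin l) : F × F :=
  (if k = j then 1 else 0, if k < j then -sympInner (u k) (u j) else 0)

lemma sympInner_gramCorrection {m l : ℕ} (u : Fin l → Fin m → F × F) (i j : Fin l) :
    sympInner (gramCorrection u i) (gramCorrection u j) = -sympInner (u i) (u j) := by
  have : sympInner (gramCorrection u i) (gramCorrection u j) =
      (gramCorrection u j i).2 - (gramCorrection u i j).2 :=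
    calc sympInner (gramCorrection u i) (gramCorrection u j)
        = ∑ k, ((if k = i then (gramCorrection u j k).2 else 0) -
            if k = j then (gramCorrection u i k).2 else 0) :=
          sum_congr rfl fun k _ ↦ by
            simp only [gramCorrection, ite_mul, mul_ite, one_mul, mul_one, zero_mul, mul_zero]
            split_ifs <;> rfl
      _ = (gramCorrection u j i).2 - (gramCorrection u i j).2 := by simp
  rw [this]
  rcases lt_trichotomy i j with h | rfl | h
  · simp [gramCorrection, h, h.not_gt]
  · simp [sympInner_self]
  · simp [gramCorrection, h, h.not_gt, sympInner_comm_neg (u i)]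

lemma linearIndependent_append_gramCorrection {m l : ℕ} (u : Fin l → Fin m → F × F) :
    LinearIndependent F fun i ↦ Fin.append (u i) (gramCorrection u i) := by
  refine Fintype.linearIndependent_iff.2 fun g hg i ↦ ?_
  have := congrArg Prod.fst (congrFun hg (Fin.natAdd m i))
  simpa [gramCorrection, Prod.fst_sum] using this

variable [Fintype F] [DecidableEq F]

variable (F) in
/-- The `ℓ`-tuples of linearly independent, pairwise symplectically orthogonal vectors of
`B_q^S(2n, r)`: the sample space of the theorem. -/
noncomputable def isotropicTuples (n r ℓ : ℕ) : Finset (Fin ℓ → Fin n → F × F) :=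
  {v | (∀ i, v i ∈ sympBall F n r) ∧ LinearIndependent F v ∧ ∀ i j, sympInner (v i) (v j) = 0}

lemma sympBall_eq_hammingBall (n r : ℕ) : sympBall F n r = hammingBall (Fin n) (F × F) r := rfl

lemma card_hammingBall_pow_le_card_isotropicTuples (m s l : ℕ) :
    #(hammingBall (Fin m) (F × F) s) ^ l ≤ #(isotropicTuples F (m + l) (s + l) l) := by
  calc #(hammingBall (Fin m) (F × F) s) ^ l
      = #(Fintype.piFinset fun _ : Fin l ↦ hammingBall (Fin m) (F × F) s) := by simp
    _ ≤ #(isotropicTuples F (m + l) (s + l) l) := by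
      refine card_le_card_of_injOn (fun u i ↦ Fin.append (u i) (gramCorrection u i))
        (fun u hu ↦ ?_) fun u _ u' _ h ↦ ?_
      · have hu' : ∀ i, hammingNorm (u i) ≤ s := by simpa using hu
        have hball (i : Fin l) : hammingNorm (Fin.append (u i) (gramCorrection u i)) ≤ s + l := by
          rw [hammingNorm_append]
          exact add_le_add (hu' i) (hammingNorm_le_card_fintype.trans_eq (Fintype.card_fin l))
        simpa [isotropicTuples, sympBall_eq_hammingBall, hball, sympInner_append,
          sympInner_gramCorrection] using linearIndependent_append_gramCorrection u
      · funext i k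
        simpa using congrFun (congrFun h i) (Fin.castAdd l k)

lemma card_hammingBall_pow_le_mul_card_isotropicTuples {n r ℓ : ℕ} {κ : ℝ} (hℓn : ℓ ≤ n)
    (hℓr : ℓ ≤ r) (hκ : (n : ℝ) * Fintype.card (F × F) ≤ κ * (r - ℓ + 1)) :
    (#(hammingBall (Fin n) (F × F) r) : ℝ) ^ ℓ ≤
      (Fintype.card (F × F) * (1 + κ)) ^ ℓ ^ 2 * #(isotropicTuples F n r ℓ) := by
  obtain ⟨m, rfl⟩ := Nat.exists_eq_add_of_le' hℓn
  obtain ⟨s, rfl⟩ := Nat.exists_eq_add_of_le' hℓr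
  have hκ' : (m : ℝ) * Fintype.card (F × F) ≤ κ * (s + 1) :=
    calc (m : ℝ) * Fintype.card (F × F) ≤ (m + ℓ : ℕ) * Fintype.card (F × F) := by
          gcongr; exact Nat.le_add_right m ℓ
      _ ≤ κ * ((s + ℓ : ℕ) - ℓ + 1) := hκ
      _ = κ * (s + 1) := by push_cast; ring
  have hκ0 : 0 ≤ κ := nonneg_of_mul_nonneg_left (le_trans (by positivity) hκ') (by positivity)
  set L := (Fintype.card (F × F) : ℝ) * (1 + κ)
  calc (#(hammingBall (Fin (m + ℓ)) (F × F) (s + ℓ)) : ℝ) ^ ℓ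
      ≤ (L ^ ℓ * #(hammingBall (Fin m) (F × F) s)) ^ ℓ := by
        gcongr; exact card_hammingBall_fin_add_add_le ℓ hκ'
    _ = L ^ ℓ ^ 2 * #(hammingBall (Fin m) (F × F) s) ^ ℓ := by rw [mul_pow, ← pow_mul, sq]
    _ ≤ L ^ ℓ ^ 2 * #(isotropicTuples F (m + ℓ) (s + ℓ) ℓ) := by
        gcongr; exact_mod_cast card_hammingBall_pow_le_card_isotropicTuples m s ℓ

variable (F) in
lemma exists_eventually_card_hammingBall_pow_le {δ : ℝ} (hδ : 0 < δ) :
    ∃ K : ℝ, 0 < K ∧ ∀ᶠ n : ℕ in atTop, ∀ ℓ : ℕ, (ℓ : ℝ) ≤ √n →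
      (#(hammingBall (Fin n) (F × F) ⌊δ * n⌋₊) : ℝ) ^ ℓ ≤
        Real.exp (K * ℓ ^ 2) * #(isotropicTuples F n ⌊δ * n⌋₊ ℓ) := by
  set Q := (Fintype.card (F × F) : ℝ)
  have hQ : 1 < Q := Nat.one_lt_cast.2 Fintype.one_lt_card
  set L := Q * (1 + Q / (δ / 2))
  have hL : 1 < L := one_lt_mul_of_lt_of_le hQ (le_add_of_nonneg_right (by positivity))
  have hsqrt : Tendsto (fun n : ℕ ↦ √(n : ℝ)) atTop atTop :=
    Real.tendsto_sqrt_atTop.comp tendsto_natCast_atTop_atTop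
  refine ⟨Real.log L, Real.log_pos hL, ?_⟩
  filter_upwards [hsqrt.eventually_ge_atTop (1 / (δ / 2)), hsqrt.eventually_ge_atTop 1]
    with n hnδ hn1 ℓ hℓ
  have hsq : √(n : ℝ) * √(n : ℝ) = n := Real.mul_self_sqrt n.cast_nonneg
  have hℓδ : (ℓ : ℝ) ≤ δ / 2 * n := hℓ.trans <| by
    rw [div_le_iff₀ (by positivity)] at hnδ
    nlinarith
  have hℓn : ℓ ≤ n := Nat.cast_le.1 (hℓ.trans (by nlinarith) : (ℓ : ℝ) ≤ n)
  have hℓr : ℓ ≤ ⌊δ * n⌋₊ := Nat.le_floor (hℓδ.trans (by gcongr; linarith))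
  have hκ : n * Q ≤ Q / (δ / 2) * (⌊δ * n⌋₊ - ℓ + 1) := by
    rw [div_mul_eq_mul_div, le_div_iff₀ (by positivity), mul_right_comm, mul_comm _ Q]
    gcongr
    linarith [Nat.lt_floor_add_one (δ * n)]
  have hexp : L ^ ℓ ^ 2 = Real.exp (Real.log L * ℓ ^ 2) := by
    rw [mul_comm, ← Nat.cast_pow, Real.exp_nat_mul, Real.exp_log (by positivity)]
  exact hexp ▸ card_hammingBall_pow_le_mul_card_isotropicTuples hℓn hℓr hκ

lemma card_filter_isotropicTuples_le (n r ℓ : ℕ) :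
    #{v ∈ isotropicTuples F n r ℓ | ∑ i, v i ∈ sympBall F n r} ≤
      #{v ∈ Fintype.piFinset fun _ : Fin ℓ ↦ hammingBall (Fin n) (F × F) r |
        ∑ i, v i ∈ hammingBall (Fin n) (F × F) r} :=
  card_le_card <| filter_subset_filter _ fun v hv ↦ by
    simpa [isotropicTuples, sympBall_eq_hammingBall] using (mem_filter.1 hv).2.1

variable (F) in
lemma exists_eventually_isotropicTuples_nonempty_and_card_le {δ : ℝ} (hδ0 : 0 < δ)
    (hδ1 : δ < 1 - 1 / Fintype.card (F × F)) :
    ∃ a K : ℝ, 0 < a ∧ 0 < K ∧ ∀ᶠ n : ℕ in atTop, ∀ ℓ : ℕ, 2 ≤ ℓ → (ℓ : ℝ) ≤ √n →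
      (isotropicTuples F n ⌊δ * n⌋₊ ℓ).Nonempty ∧
      (#{v ∈ isotropicTuples F n ⌊δ * n⌋₊ ℓ | ∑ i, v i ∈ sympBall F n ⌊δ * n⌋₊} : ℝ) ≤
        Real.exp (K * ℓ ^ 2 - a * n) * #(isotropicTuples F n ⌊δ * n⌋₊ ℓ) := by
  obtain ⟨a, ha, hupper⟩ := exists_eventually_card_sum_mem_hammingBall_le (F × F) hδ0 hδ1
  obtain ⟨K, hK, hlower⟩ := exists_eventually_card_hammingBall_pow_le F hδ0
  refine ⟨a, K, ha, hK, ?_⟩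
  filter_upwards [hupper, hlower] with n hup hlow ℓ hℓ hℓn
  obtain ⟨k, rfl⟩ := Nat.exists_eq_add_of_le' hℓ
  specialize hlow (k + 2) hℓn
  set r := ⌊δ * n⌋₊
  have hpos := (pow_pos (Nat.cast_pos.2 (card_hammingBall_pos r)) _).trans_le hlow
  refine ⟨card_pos.1 (Nat.cast_pos.1 (pos_of_mul_pos_right hpos (Real.exp_nonneg _))), ?_⟩
  calc _ ≤ Real.exp (-(a * n)) * (#(hammingBall (Fin n) (F × F) r) : ℝ) ^ (k + 2) :=
        (Nat.cast_le.2 (card_filter_isotropicTuples_le n r (k + 2))).trans (hup k)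
    _ ≤ Real.exp (-(a * n)) *
          (Real.exp (K * (k + 2 : ℕ) ^ 2) * #(isotropicTuples F n r (k + 2))) := by gcongr
    _ = _ := by rw [← mul_assoc, ← Real.exp_add, neg_add_eq_sub]

end Isotropic

lemma mul_sq_sub_mul_sq_le {a K s x : ℝ} (hK : 0 < K) (ha : 0 < a) (hx : 0 ≤ x)
    (hxs : x ≤ min 1 (a / (2 * K)) * s) : K * x ^ 2 - a * s ^ 2 ≤ -(a / 2 * s ^ 2) := by
  set c := min 1 (a / (2 * K))
  have hc : 0 < c := by positivity
  have hcc : K * c ^ 2 ≤ a / 2 :=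
    calc K * c ^ 2 ≤ K * c := by
          gcongr; exact pow_le_of_le_one hc.le (min_le_left _ _) two_ne_zero
      _ ≤ K * (a / (2 * K)) := by gcongr; exact min_le_right _ _
      _ = a / 2 := by field_simp
  have hKx : K * x ^ 2 ≤ a / 2 * s ^ 2 :=
    calc K * x ^ 2 ≤ K * (c * s) ^ 2 := by gcongr
      _ = K * c ^ 2 * s ^ 2 := by ring
      _ ≤ a / 2 * s ^ 2 := by gcongr
  linarith

lemma exp_neg_le_two_rpow_neg {x y : ℝ} (hy : 0 ≤ y) (hyx : y ≤ x) :
    Real.exp (-x) ≤ 2 ^ (-y) := by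
  rw [Real.rpow_def_of_pos two_pos, Real.exp_le_exp]
  nlinarith [Real.log_two_lt_d9]

/-- For a prime power `q` (realized as the cardinality of a finite field `F`)
and a constant `δ ∈ (0, 1 - 1/q²)`, there exist constants `c'' > 0` and `h'_δ ∈ (0,1)` such
that for all sufficiently large `n` and every `ℓ` with `2 ≤ ℓ ≤ c''√n`: the set of `ℓ`-tuples
of vectors of `B_q^S(2n, ⌊δn⌋)` that are linearly independent and pairwise symplectically
orthogonal is nonempty, and if a tuple is drawn uniformly from it, the probability that
`v_1 + ⋯ + v_ℓ ∈ B_q^S(2n, ⌊δn⌋)` is at most `2^{-h'_δ n}` (expressed by counting). -/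
theorem symp_orth_tuple_sum_escape
    (q : ℕ) (F : Type) [Field F] [Fintype F] [DecidableEq F] (hF : Fintype.card F = q)
    (δ : ℝ) (hδ0 : 0 < δ) (hδ1 : δ < 1 - 1 / (q : ℝ) ^ 2) :
    ∃ c'' : ℝ, 0 < c'' ∧ ∃ h' : ℝ, 0 < h' ∧ h' < 1 ∧ ∃ N : ℕ, ∀ n : ℕ, N ≤ n →
      ∀ ℓ : ℕ, 2 ≤ ℓ → (ℓ : ℝ) ≤ c'' * Real.sqrt n →
      ∀ good : Finset (Fin ℓ → Fin n → F × F),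
        good = ((Finset.univ : Finset (Fin ℓ → Fin n → F × F)).filter fun v =>
          (∀ i, v i ∈ sympBall F n ⌊δ * (n : ℝ)⌋₊) ∧ LinearIndependent F v ∧
            ∀ i j, sympInner (v i) (v j) = 0) →
        good.Nonempty ∧
          ((good.filter fun v => (∑ i, v i) ∈ sympBall F n ⌊δ * (n : ℝ)⌋₊).card : ℝ) ≤
            (2 : ℝ) ^ (-(h' * (n : ℝ))) * (good.card : ℝ) := by
  obtain ⟨a, K, ha, hK, hbound⟩ := exists_eventually_isotropicTuples_nonempty_and_card_le F hδ0
    (by simpa [Fintype.card_prod, hF, sq] using hδ1)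
  obtain ⟨N, hN⟩ := eventually_atTop.1 hbound
  refine ⟨min 1 (a / (2 * K)), by positivity, min (a / 2) (1 / 2), by positivity,
    (min_le_right _ _).trans_lt (by norm_num), N, fun n hn ℓ hℓ hℓn good hgood ↦ ?_⟩
  change good = isotropicTuples F n ⌊δ * n⌋₊ ℓ at hgood
  subst hgood
  have hℓsqrt : (ℓ : ℝ) ≤ √n :=
    hℓn.trans (mul_le_of_le_one_left (Real.sqrt_nonneg n) (min_le_left _ _))
  obtain ⟨hne, hcard⟩ := hN n hn ℓ hℓ hℓsqrt
  have hexponent : K * ℓ ^ 2 - a * n ≤ -(a / 2 * n) := by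
    simpa using mul_sq_sub_mul_sq_le hK ha ℓ.cast_nonneg hℓn
  have hexp : Real.exp (K * ℓ ^ 2 - a * n) ≤ 2 ^ (-(min (a / 2) (1 / 2) * n)) :=
    (Real.exp_le_exp.2 hexponent).trans <|
      exp_neg_le_two_rpow_neg (by positivity) (by gcongr; exact min_le_left _ _)
  exact ⟨hne, hcard.trans (by gcongr)⟩
end
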